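/- arXiv:1506.08980 — 17 statements merged into one kernel-verified Lean document; each statement's English description precedes it below -/
import Mathlib

section
/- Let X be a zero-dimensional space. A subset Z ⊆ X is the zero-set Z(f) of some function f ∈ C_c(X) if and only if there is a sequence (U_n)_{n∈ℕ} of clopen subsets of X with Z = ⋂_{n∈ℕ} U_n. -/
open Set TopologicalSpace

/-!
If `f` is continuous with countable image, then arbitrarily small `r > 0` are not values of `|f|`,
and for such `r` the set `{|f| < r} = {|f| ≤ r}` is clopen; a sequence `r n → 0` of them exhibits
the zero-set of `f` as an intersection of clopen sets. Conversely, for clopen `U n`, the function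
sending `x` to `1 / (N + 1)`, with `N` the first index such that `x ∉ U N`, and to `0` when there is
no such index, has countable image and zero-set `⋂ n, U n`. It is locally constant off this
intersection, and at most `1 / (n + 1)` on the neighbourhood `⋂ k < n, U k` of it.
-/

/-- `1 / (N + 1)` for the first `N` with `x ∉ U N`, and `0` if `x` lies in every `U n`. -/
noncomputable def firstExit {X : Type*} (U : ℕ → Set X) (x : X) : ℝ :=
  open Classical in if h : ∃ n, x ∉ U n then 1 / ((Nat.find h : ℝ) + 1) else 0

lemma firstExit_of_forall_mem {X : Type*} {U : ℕ → Set X} {x : X} (h : ∀ n, x ∈ U n) :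
    firstExit U x = 0 := by
  simp [firstExit, h]

lemma firstExit_eq {X : Type*} {U : ℕ → Set X} {x : X} {n : ℕ} (hlt : ∀ k < n, x ∈ U k)
    (hn : x ∉ U n) : firstExit U x = 1 / ((n : ℝ) + 1) := by
  classical
  have h : ∃ n, x ∉ U n := ⟨n, hn⟩
  have hfind : Nat.find h = n := by
    rw [Nat.find_eq_iff]
    exact ⟨hn, fun k hk => not_not.2 (hlt k hk)⟩
  rw [firstExit, dif_pos h, ← hfind]

lemma firstExit_cases {X : Type*} (U : ℕ → Set X) (x : X) :
    (∀ n, x ∈ U n) ∨ ∃ n, (∀ k < n, x ∈ U k) ∧ x ∉ U n := by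
  classical
  by_cases h : ∃ n, x ∉ U n
  · exact Or.inr ⟨Nat.find h, fun k hk => not_not.1 (Nat.find_min h hk), Nat.find_spec h⟩
  · exact Or.inl (by simpa using h)

lemma continuous_firstExit {X : Type*} [TopologicalSpace X] {U : ℕ → Set X}
    (hU : ∀ n, IsClopen (U n)) : Continuous (firstExit U) := by
  have hopen : ∀ n, IsOpen (⋂ k ∈ Iio n, U k) := fun n =>
    (finite_Iio n).isOpen_biInter fun k _ => (hU k).isOpen
  rw [continuous_iff_continuousAt]
  intro x
  rcases firstExit_cases U x with hx | ⟨n, hlt, hn⟩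
  · rw [Metric.continuousAt_iff']
    intro ε hε
    obtain ⟨n, hnε⟩ := exists_nat_one_div_lt hε
    filter_upwards [(hopen n).mem_nhds (mem_iInter₂.2 fun k _ => hx k)] with y hy
    rw [firstExit_of_forall_mem hx, Real.dist_eq, sub_zero]
    rcases firstExit_cases U y with hy' | ⟨m, hmlt, hm⟩
    · simpa [firstExit_of_forall_mem hy'] using hε
    · have hnm : n ≤ m := by
        by_contra hlt
        exact hm (mem_iInter₂.1 hy m (not_le.1 hlt))
      rw [firstExit_eq hmlt hm, abs_of_pos (by positivity)]
      exact (Nat.one_div_le_one_div hnm).trans_lt hnε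
  · have hev : firstExit U =ᶠ[nhds x] fun _ => 1 / ((n : ℝ) + 1) := by
      filter_upwards [(hopen n).mem_nhds (mem_iInter₂.2 hlt),
        (hU n).compl.isOpen.mem_nhds hn] with y hy hyn
      exact firstExit_eq (mem_iInter₂.1 hy) hyn
    exact continuousAt_const.congr hev.symm

/-- In a zero-dimensional (Hausdorff, clopen-basis) space `X`, a set `Z ⊆ X`
is the zero-set of some continuous real-valued function with countable image
iff it is a countable intersection of clopen sets. -/
theorem stmt_0 {X : Type*} [TopologicalSpace X] [T2Space X]
    (hX : IsTopologicalBasis {s : Set X | IsClopen s}) (Z : Set X) :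
    (∃ f : X → ℝ, Continuous f ∧ (Set.range f).Countable ∧ Z = f ⁻¹' {0}) ↔
      (∃ U : ℕ → Set X, (∀ n, IsClopen (U n)) ∧ Z = ⋂ n, U n) := by
  constructor
  · rintro ⟨f, hf, hc, rfl⟩
    have hr : ∀ n : ℕ, ∃ r : ℝ, (0 < r ∧ r < 1 / ((n : ℝ) + 1)) ∧ ∀ x, |f x| ≠ r := by
      intro n
      -- A nonempty open interval meets the complement of any countable set of reals.
      obtain ⟨r, hr, hr'⟩ := ((hc.image abs).dense_compl ℝ).exists_mem_open isOpen_Ioo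
        (nonempty_Ioo.2 (Nat.one_div_pos_of_nat (α := ℝ) (n := n)))
      exact ⟨r, hr', fun x hx => hr ⟨f x, mem_range_self x, hx⟩⟩
    choose r hr hne using hr
    refine ⟨fun n => {x | |f x| < r n}, fun n => ⟨?_, isOpen_lt hf.abs continuous_const⟩, ?_⟩
    · have heq : {x | |f x| < r n} = {x | |f x| ≤ r n} :=
        Set.ext fun x => (hne n x).le_iff_lt.symm
      beta_reduce
      rw [heq]
      exact isClosed_le hf.abs continuous_const
    · ext x
      simp only [mem_preimage, mem_singleton_iff, mem_iInter, mem_ofPred_eq]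
      refine ⟨fun h n => by simpa [h] using (hr n).1, fun h => ?_⟩
      by_contra hx
      obtain ⟨n, hn⟩ := exists_nat_one_div_lt (abs_pos.2 hx)
      linarith [h n, (hr n).2]
  · rintro ⟨U, hU, rfl⟩
    refine ⟨firstExit U, continuous_firstExit hU, ?_, ?_⟩
    · refine ((countable_range fun n : ℕ => 1 / ((n : ℝ) + 1)).insert 0).mono ?_
      rintro _ ⟨x, rfl⟩
      rcases firstExit_cases U x with hx | ⟨n, hlt, hn⟩
      · exact Or.inl (firstExit_of_forall_mem hx)
      · exact Or.inr ⟨n, (firstExit_eq hlt hn).symm⟩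
    · ext x
      simp only [mem_iInter, mem_preimage, mem_singleton_iff]
      refine ⟨firstExit_of_forall_mem, fun h => ?_⟩
      rcases firstExit_cases U x with hx | ⟨n, hlt, hn⟩
      · exact hx
      · rw [firstExit_eq hlt hn] at h
        exact absurd h (Nat.one_div_pos_of_nat (α := ℝ)).ne'
end

section
/- Let X be a zero-dimensional space with Banaschewski compactification bX. For all f, g ∈ C_c(X), the closure in bX of Z(f) ∩ Z(g) equals the intersection of the closure in bX of Z(f) with the closure in bX of Z(g). -/
open Set TopologicalSpace

/-!
Let `p` lie in both closures but not in `cl (Z(f) ∩ Z(g))`, and take a clopen neighbourhood `V`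
of `p` in `B` that misses `Z(f) ∩ Z(g)`. Since `f` and `g` have countable image, there is a `t > 0`
which is not of the form `|f x| / |g y|`; then `|f| ≠ t |g|` on `V ∩ X`, so
`C = {x ∈ X ∩ V : |f x| < t |g x|}` is clopen in `X`. It contains `Z(f) ∩ V` and misses `Z(g)`.
The indicator of `C` extends continuously to `B`, and neither value of the extension at `p` is
possible: near `p` there are points of both `Z(f) ∩ V` and `Z(g) ∩ V`.
-/

/-- In the Banaschewski compactification `B` of a zero-dimensional space `X`,
for `f, g ∈ C_c(X)` one has `cl_B (Z(f) ∩ Z(g)) = cl_B Z(f) ∩ cl_B Z(g)`. -/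
theorem stmt_1 {B : Type*} [TopologicalSpace B] [CompactSpace B] [T2Space B]
    (hB : IsTopologicalBasis {s : Set B | IsClopen s})
    (X : Set B) (hd : Dense X)
    (hext : ∀ g : X → Bool, Continuous g → ∃ G : B → Bool, Continuous G ∧ ∀ x : X, G x = g x)
    (f g : X → ℝ) (hf : Continuous f) (hfc : (Set.range f).Countable)
    (hg : Continuous g) (hgc : (Set.range g).Countable) :
    closure (Subtype.val '' (f ⁻¹' {0} ∩ g ⁻¹' {0})) =
      closure (Subtype.val '' (f ⁻¹' {0})) ∩ closure (Subtype.val '' (g ⁻¹' {0})) := by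
  apply Subset.antisymm
  · exact subset_inter (closure_mono (image_mono inter_subset_left))
      (closure_mono (image_mono inter_subset_right))
  rintro p ⟨hpf, hpg⟩
  by_contra hp
  obtain ⟨V, hV, hpV, hVsub⟩ := hB.exists_subset_of_mem_open (mem_compl hp)
    isClosed_closure.isOpen_compl
  have hV : IsClopen V := hV
  have hVfg : ∀ x : X, (x : B) ∈ V → f x = 0 → g x = 0 → False := fun x hx h1 h2 =>
    hVsub hx (subset_closure ⟨x, ⟨h1, h2⟩, rfl⟩)
  obtain ⟨t, ht0, ht⟩ : ∃ t : ℝ, 0 < t ∧ ∀ x y : X, t ≠ |f x| / |g y| := by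
    have hc : (image2 (fun a b : ℝ => |a| / |b|) (range f) (range g)).Countable :=
      hfc.image2 hgc _
    obtain ⟨t, htc, ht0⟩ := hc.dense_compl ℝ |>.exists_mem_open (isOpen_Ioi (a := (0 : ℝ)))
      ⟨1, mem_Ioi.mpr one_pos⟩
    exact ⟨t, ht0, fun x y h => htc ⟨f x, ⟨x, rfl⟩, g y, ⟨y, rfl⟩, h.symm⟩⟩
  let C : Set X := {x | (x : B) ∈ V ∧ |f x| < t * |g x|}
  have hC : IsClopen C := by
    constructor
    · have hCc : Cᶜ = Subtype.val ⁻¹' Vᶜ ∪ {x : X | t * |g x| < |f x|} := by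
        ext x
        simp only [C, mem_compl_iff, mem_ofPred_eq, mem_union, mem_preimage, not_and, not_lt]
        constructor
        · intro h
          by_cases hx : (x : B) ∈ V
          · refine Or.inr (lt_of_le_of_ne (h hx) fun heq => ?_)
            by_cases h0 : g x = 0
            · exact hVfg x hx (by simpa [h0] using heq.symm) h0
            · exact ht x x (by rw [eq_div_iff (abs_ne_zero.mpr h0)]; exact heq)
          · exact Or.inl hx
        · rintro (h | h) hx
          · exact absurd hx h
          · exact h.le
      rw [← isOpen_compl_iff, hCc]
      exact (hV.compl.isOpen.preimage continuous_subtype_val).union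
        (isOpen_lt (by fun_prop) (by fun_prop))
    · exact (hV.isOpen.preimage continuous_subtype_val).inter
        (isOpen_lt hf.abs (hg.abs.const_mul t))
  obtain ⟨G, hG, hGC⟩ := hext C.boolIndicator ((continuous_boolIndicator_iff_isClopen C).mpr hC)
  have hW : IsOpen (V ∩ G ⁻¹' {G p}) :=
    hV.isOpen.inter ((isOpen_discrete _).preimage hG)
  obtain ⟨_, ⟨hxV, hxG⟩, x, hx, rfl⟩ := mem_closure_iff.mp hpf _ hW ⟨hpV, rfl⟩
  obtain ⟨_, ⟨hyV, hyG⟩, y, hy, rfl⟩ := mem_closure_iff.mp hpg _ hW ⟨hpV, rfl⟩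
  have hx : f x = 0 := hx
  have hy : g y = 0 := hy
  have hxC : x ∈ C := by
    refine ⟨hxV, ?_⟩
    rw [hx, abs_zero]
    exact mul_pos ht0 (abs_pos.mpr fun h => hVfg x hxV hx h)
  have hyC : y ∉ C := fun h => by
    have h2 := h.2
    rw [hy, abs_zero, mul_zero] at h2
    exact absurd h2 (abs_nonneg _).not_gt
  have hGx : G x = true := (hGC x).trans ((mem_iff_boolIndicator C x).mp hxC)
  have hGy : G y = false := (hGC y).trans ((notMem_iff_boolIndicator C y).mp hyC)
  have hxy : G x = G y := Eq.trans hxG (Eq.symm hyG)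
  rw [hGx, hGy] at hxy
  exact absurd hxy (by decide)
end

section
/- (Gelfand–Kolmogoroff for C_c) Let X be a zero-dimensional space with Banaschewski compactification bX. For each point p ∈ bX, the set M^p_c = {f ∈ C_c(X) : p ∈ cl_{bX} Z(f)} is a maximal ideal of the ring C_c(X); moreover, every maximal ideal of C_c(X) is equal to M^p_c for exactly one point p ∈ bX. -/
/-!
The proof rests on one separation property: disjoint zero-sets of functions in `C_c(X)` have
disjoint closures in `B` (`not_mem_closure_zeros_of_disjoint`). Indeed, for `f`, `g` without common
zeros, `h = f² / (f² + g²)` has countable range, so it misses some `r ∈ (0, 1)`; then `{h < r}` is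
a clopen subset of `X` containing `Z(f)` and missing `Z(g)`, and its indicator extends to `B`.
Localizing at clopen neighbourhoods gives `cl Z(f) ∩ cl Z(g) = cl (Z(f) ∩ Z(g))`
(`mem_closure_zeros_inter`), which makes `M^p_c` closed under addition.

Maximality of `M^p_c`: if `f ∉ M^p_c`, some clopen neighbourhood `V` of `p` misses `Z(f)`. The
indicator `e` of `V` satisfies `1 - e ∈ M^p_c`, and `f * e + (1 - e)` has no zeros, hence is a unit.

Conversely, the zero-sets of a proper ideal have the finite intersection property, because
`f² + g²` vanishes exactly on `Z(f) ∩ Z(g)` and is not a unit. Compactness of `B` gives a point `p`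
in the closures of all of them, so a maximal ideal is contained in, and so equal to, `M^p_c`.
Clopen indicators separate points, whence uniqueness.
-/

open Set TopologicalSpace

/-- The subring `C_c(Y)` of `C(Y, ℝ)` consisting of continuous real-valued
functions with countable image. -/
def Cc (Y : Type*) [TopologicalSpace Y] : Subring C(Y, ℝ) where
  carrier := {f | (Set.range (f : Y → ℝ)).Countable}
  mul_mem' {a b} ha hb := Set.Countable.mono
    (by rintro x ⟨y, rfl⟩; exact Set.mem_image2_of_mem ⟨y, rfl⟩ ⟨y, rfl⟩)
    (ha.image2 hb (· * ·))
  one_mem' := Set.Countable.mono (by rintro x ⟨y, rfl⟩; rfl) (Set.countable_singleton 1)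
  add_mem' {a b} ha hb := Set.Countable.mono
    (by rintro x ⟨y, rfl⟩; exact Set.mem_image2_of_mem ⟨y, rfl⟩ ⟨y, rfl⟩)
    (ha.image2 hb (· + ·))
  zero_mem' := Set.Countable.mono (by rintro x ⟨y, rfl⟩; rfl) (Set.countable_singleton 0)
  neg_mem' {a} ha := Set.Countable.mono
    (by rintro x ⟨y, rfl⟩; exact ⟨a y, ⟨y, rfl⟩, rfl⟩) (ha.image (-·))

namespace CcGelfand

section General

variable {Y : Type*} [TopologicalSpace Y]

/-- The zero-set `Z(f)` of `f ∈ C_c(Y)`. -/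
def zeros (f : Cc Y) : Set Y := ((f : C(Y, ℝ)) : Y → ℝ) ⁻¹' {0}

theorem mem_zeros {f : Cc Y} {y : Y} : y ∈ zeros f ↔ (f : C(Y, ℝ)) y = 0 := Iff.rfl

theorem isUnit_of_zeros_eq_empty (f : Cc Y) (h : zeros f = ∅) : IsUnit f := by
  have h0 : ∀ y, (f : C(Y, ℝ)) y ≠ 0 := fun y hy =>
    (h ▸ (mem_zeros.2 hy) : y ∈ (∅ : Set Y))
  let g : C(Y, ℝ) := ⟨fun y => ((f : C(Y, ℝ)) y)⁻¹, (f : C(Y, ℝ)).continuous.inv₀ h0⟩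
  have hg : g ∈ Cc Y := Set.Countable.mono
    (by rintro x ⟨y, rfl⟩; exact ⟨(f : C(Y, ℝ)) y, ⟨y, rfl⟩, rfl⟩)
    (Set.Countable.image f.2 (·⁻¹))
  refine IsUnit.of_mul_eq_one ⟨g, hg⟩ ?_
  ext y
  exact mul_inv_cancel₀ (h0 y)

theorem zeros_sq_add_sq (f g : Cc Y) : zeros (f * f + g * g) = zeros f ∩ zeros g := by
  ext y
  change (f : C(Y, ℝ)) y * (f : C(Y, ℝ)) y + (g : C(Y, ℝ)) y * (g : C(Y, ℝ)) y = 0 ↔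
    (f : C(Y, ℝ)) y = 0 ∧ (g : C(Y, ℝ)) y = 0
  exact mul_self_add_mul_self_eq_zero

/-- The indicator function of a clopen set, as an element of `C_c(Y)`. -/
noncomputable def clopenInd (U : Set Y) (hU : IsClopen U) : Cc Y :=
  ⟨⟨U.indicator 1, hU.continuous_indicator continuous_one⟩,
    Set.Countable.mono (by
      rintro x ⟨y, rfl⟩
      by_cases hy : y ∈ U
      · left; simp [hy]
      · right; simp [hy]) (Set.Countable.insert (1 : ℝ) (Set.countable_singleton 0))⟩

theorem clopenInd_of_mem {U : Set Y} (hU : IsClopen U) {y : Y} (hy : y ∈ U) :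
    (clopenInd U hU : C(Y, ℝ)) y = 1 := by
  simp [clopenInd, hy]

theorem clopenInd_of_notMem {U : Set Y} (hU : IsClopen U) {y : Y} (hy : y ∉ U) :
    (clopenInd U hU : C(Y, ℝ)) y = 0 := by
  simp [clopenInd, hy]

theorem zeros_one_sub_clopenInd (U : Set Y) (hU : IsClopen U) :
    zeros (1 - clopenInd U hU) = U := by
  ext y
  change 1 - (clopenInd U hU : C(Y, ℝ)) y = 0 ↔ _
  by_cases hy : y ∈ U
  · simp [clopenInd_of_mem hU hy, hy]
  · simp [clopenInd_of_notMem hU hy, hy]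

/-- Multiplying by the indicator of `U` and adding the indicator of the complement replaces `f`
by the constant `1` off `U`, so only the zeros in `U` survive. -/
theorem zeros_localize (f : Cc Y) (U : Set Y) (hU : IsClopen U) :
    zeros (f * clopenInd U hU + (1 - clopenInd U hU)) = zeros f ∩ U := by
  ext y
  change (f : C(Y, ℝ)) y * (clopenInd U hU : C(Y, ℝ)) y + (1 - (clopenInd U hU : C(Y, ℝ)) y) = 0 ↔
    (f : C(Y, ℝ)) y = 0 ∧ _
  by_cases hy : y ∈ U
  · simp [clopenInd_of_mem hU hy, hy]
  · simp [clopenInd_of_notMem hU hy, hy]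

/-- Countability of ranges is what makes the separating set clopen: the level `r` at which
`f² / (f² + g²)` is cut can be chosen outside the range. -/
theorem exists_clopen_separating (f g : Cc Y) (h : zeros f ∩ zeros g = ∅) :
    ∃ U : Set Y, IsClopen U ∧ zeros f ⊆ U ∧ zeros g ⊆ Uᶜ := by
  obtain ⟨u, hu⟩ := isUnit_of_zeros_eq_empty (f * f + g * g) (by rw [zeros_sq_add_sq, h])
  let k : Cc Y := f * f * (↑u⁻¹ : Cc Y)
  have hk : k * (f * f + g * g) = f * f := by
    rw [← hu]; simp [k, mul_assoc]
  have hk' : ∀ y, (k : C(Y, ℝ)) y * ((f : C(Y, ℝ)) y * (f : C(Y, ℝ)) y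
      + (g : C(Y, ℝ)) y * (g : C(Y, ℝ)) y) = (f : C(Y, ℝ)) y * (f : C(Y, ℝ)) y := fun y =>
    congrArg (fun q : Cc Y => (q : C(Y, ℝ)) y) hk
  have hne : ∀ y, (f : C(Y, ℝ)) y = 0 → (g : C(Y, ℝ)) y = 0 → False := fun y h1 h2 =>
    (h ▸ (⟨h1, h2⟩ : y ∈ zeros f ∩ zeros g) : y ∈ (∅ : Set Y))
  -- a value of `(0, 1)` omitted by `f² / (f² + g²)`
  obtain ⟨r, hr, hr01⟩ := (Set.Countable.dense_compl ℝ k.2).exists_mem_open isOpen_Ioo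
    (Set.nonempty_Ioo.2 (zero_lt_one' ℝ))
  have hrne : ∀ y, (k : C(Y, ℝ)) y ≠ r := fun y hy => hr ⟨y, hy⟩
  refine ⟨{y | (k : C(Y, ℝ)) y < r}, ⟨?_, ?_⟩, ?_, ?_⟩
  · have : {y | (k : C(Y, ℝ)) y < r} = {y | (k : C(Y, ℝ)) y ≤ r} := by
      ext y; simp only [Set.mem_ofPred_eq]; exact (hrne y).le_iff_lt.symm
    rw [this]
    exact isClosed_le (k : C(Y, ℝ)).continuous continuous_const
  · exact isOpen_lt (k : C(Y, ℝ)).continuous continuous_const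
  · intro y hy
    have h1 := hk' y
    have h2 : (g : C(Y, ℝ)) y ≠ 0 := hne y hy
    rw [mem_zeros] at hy
    have : (k : C(Y, ℝ)) y = 0 := by
      rw [hy] at h1
      simpa [h2] using h1
    simpa [this] using hr01.1
  · intro y hy
    have h1 := hk' y
    have h2 : (f : C(Y, ℝ)) y ≠ 0 := fun h => hne y h hy
    rw [mem_zeros] at hy
    have : (k : C(Y, ℝ)) y = 1 := by
      rw [hy] at h1
      simpa [h2] using h1
    simpa [this] using hr01.2.le

end General

section Compactification

variable {B : Type*} [TopologicalSpace B] {X : Set B}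

theorem not_mem_closure_zeros_of_disjoint
    (hext : ∀ g : X → Bool, Continuous g → ∃ G : B → Bool, Continuous G ∧ ∀ x : X, G x = g x)
    (f g : Cc X) (h : zeros f ∩ zeros g = ∅) {p : B}
    (hf : p ∈ closure (Subtype.val '' zeros f)) : p ∉ closure (Subtype.val '' zeros g) := by
  intro hg
  obtain ⟨U, hU, hfU, hgU⟩ := exists_clopen_separating f g h
  obtain ⟨G, hG, hGx⟩ := hext U.boolIndicator ((continuous_boolIndicator_iff_isClopen U).2 hU)
  have h1 : p ∈ G ⁻¹' {true} := by
    refine closure_minimal ?_ (isClosed_discrete _ |>.preimage hG) hf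
    rintro _ ⟨x, hx, rfl⟩
    exact (hGx x).trans ((U.mem_iff_boolIndicator x).1 (hfU hx))
  have h2 : p ∈ G ⁻¹' {false} := by
    refine closure_minimal ?_ (isClosed_discrete _ |>.preimage hG) hg
    rintro _ ⟨x, hx, rfl⟩
    exact (hGx x).trans ((U.notMem_iff_boolIndicator x).1 (hgU hx))
  exact Bool.noConfusion (h1.symm.trans h2)

theorem isClopen_trace {V : Set B} (hV : IsClopen V) : IsClopen (Subtype.val ⁻¹' V : Set X) :=
  hV.preimage continuous_subtype_val

theorem mem_closure_zeros_inter (hB : IsTopologicalBasis {s : Set B | IsClopen s})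
    (hext : ∀ g : X → Bool, Continuous g → ∃ G : B → Bool, Continuous G ∧ ∀ x : X, G x = g x)
    {f g : Cc X} {p : B} (hf : p ∈ closure (Subtype.val '' zeros f))
    (hg : p ∈ closure (Subtype.val '' zeros g)) :
    p ∈ closure (Subtype.val '' (zeros f ∩ zeros g)) := by
  rw [hB.mem_closure_iff]
  intro V hV hpV
  by_contra hne
  have key : ∀ k : Cc X, p ∈ closure (Subtype.val '' zeros k) →
      p ∈ closure (Subtype.val '' zeros (k * clopenInd _ (isClopen_trace hV)
        + (1 - clopenInd _ (isClopen_trace hV)))) := by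
    intro k hk
    rw [zeros_localize, Set.image_inter_preimage, Set.inter_comm]
    exact hV.isOpen.inter_closure ⟨hpV, hk⟩
  refine not_mem_closure_zeros_of_disjoint hext _ _ ?_ (key f hf) (key g hg)
  rw [zeros_localize, zeros_localize, Set.eq_empty_iff_forall_notMem]
  rintro x ⟨⟨h1, h2⟩, h3, -⟩
  exact hne ⟨x, h2, x, ⟨h1, h3⟩, rfl⟩

/-- The set `M^p_c` as an ideal of `C_c(X)`. -/
def Mp (hB : IsTopologicalBasis {s : Set B | IsClopen s}) (hd : Dense X)
    (hext : ∀ g : X → Bool, Continuous g → ∃ G : B → Bool, Continuous G ∧ ∀ x : X, G x = g x)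
    (p : B) : Ideal (Cc X) where
  carrier := {f | p ∈ closure (Subtype.val '' zeros f)}
  zero_mem' := by
    have : zeros (0 : Cc X) = Set.univ := Set.eq_univ_of_forall fun _ => rfl
    simp [this, hd.closure_eq]
  add_mem' {f g} hf hg := by
    refine closure_mono (Set.image_mono ?_) (mem_closure_zeros_inter hB hext hf hg)
    rintro x ⟨h1, h2⟩
    change (f : C(X, ℝ)) x + (g : C(X, ℝ)) x = 0
    rw [mem_zeros.1 h1, mem_zeros.1 h2, add_zero]
  smul_mem' c f hf := by
    refine closure_mono (Set.image_mono ?_) hf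
    intro x hx
    change (c : C(X, ℝ)) x * (f : C(X, ℝ)) x = 0
    rw [mem_zeros.1 hx, mul_zero]

/-- Membership of `1 - 1_V` in `M^p_c` detects whether `p` lies in the clopen set `V`. -/
theorem one_sub_clopenInd_mem_iff (hd : Dense X) {V : Set B} (hV : IsClopen V) (p : B) :
    p ∈ closure (Subtype.val '' zeros (1 - clopenInd (Subtype.val ⁻¹' V : Set X)
      (isClopen_trace hV))) ↔ p ∈ V := by
  rw [zeros_one_sub_clopenInd, Subtype.image_preimage_coe, Set.inter_comm]
  constructor
  · intro h
    exact closure_minimal Set.inter_subset_left hV.isClosed h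
  · intro h
    exact hd.open_subset_closure_inter hV.isOpen h

theorem Mp_isMaximal (hB : IsTopologicalBasis {s : Set B | IsClopen s}) (hd : Dense X)
    (hext : ∀ g : X → Bool, Continuous g → ∃ G : B → Bool, Continuous G ∧ ∀ x : X, G x = g x)
    (p : B) : (Mp hB hd hext p).IsMaximal := by
  rw [Ideal.isMaximal_iff]
  constructor
  · intro h
    have h1 : zeros (1 : Cc X) = ∅ :=
      Set.eq_empty_of_forall_notMem fun _ hx => one_ne_zero (α := ℝ) hx
    change p ∈ closure (Subtype.val '' zeros (1 : Cc X)) at h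
    simp [h1] at h
  · intro J f hJ hf hfJ
    change ¬ p ∈ closure (Subtype.val '' zeros f) at hf
    rw [hB.mem_closure_iff] at hf
    push Not at hf
    obtain ⟨V, hV, hpV, hVf⟩ := hf
    have hmem := J.add_mem (J.mul_mem_right (clopenInd _ (isClopen_trace hV)) hfJ)
      (hJ ((one_sub_clopenInd_mem_iff hd hV p).2 hpV))
    refine (Ideal.eq_top_iff_one _).1 (J.eq_top_of_isUnit_mem hmem (isUnit_of_zeros_eq_empty _ ?_))
    rw [zeros_localize, Set.eq_empty_iff_forall_notMem]
    rintro x ⟨h1, h2⟩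
    exact Set.eq_empty_iff_forall_notMem.1 hVf x ⟨h2, x, h1, rfl⟩

theorem exists_mem_closure_zeros [CompactSpace B] (I : Ideal (Cc X)) (hI : I ≠ ⊤) :
    ∃ p : B, ∀ f ∈ I, p ∈ closure (Subtype.val '' zeros f) := by
  have : (⋂ f : I, closure (Subtype.val '' zeros (f : Cc X))).Nonempty := by
    have : Nonempty I := ⟨0⟩
    refine IsCompact.nonempty_iInter_of_directed_nonempty_isCompact_isClosed _ ?_ ?_
      (fun _ => isClosed_closure.isCompact) (fun _ => isClosed_closure)
    · intro f g
      refine ⟨⟨f * f + g * g, I.add_mem (I.mul_mem_left _ f.2) (I.mul_mem_left _ g.2)⟩, ?_, ?_⟩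
      · exact closure_mono (Set.image_mono (by
          rw [zeros_sq_add_sq]; exact Set.inter_subset_left))
      · exact closure_mono (Set.image_mono (by
          rw [zeros_sq_add_sq]; exact Set.inter_subset_right))
    · intro f
      rw [closure_nonempty_iff, Set.image_nonempty, Set.nonempty_iff_ne_empty]
      exact fun h => hI (I.eq_top_of_isUnit_mem f.2 (isUnit_of_zeros_eq_empty _ h))
  obtain ⟨p, hp⟩ := this
  exact ⟨p, fun f hf => Set.mem_iInter.1 hp ⟨f, hf⟩⟩

end Compactification

end CcGelfand

/-- Gelfand–Kolmogoroff for `C_c`: for every point `p` of the Banaschewski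
compactification `B` of the zero-dimensional space `X`, the set
`M^p_c = {f ∈ C_c(X) : p ∈ cl_B Z(f)}` is a maximal ideal of `C_c(X)`, and every
maximal ideal of `C_c(X)` equals `M^p_c` for exactly one `p ∈ B`. -/
theorem stmt_2 {B : Type*} [TopologicalSpace B] [CompactSpace B] [T2Space B]
    (hB : IsTopologicalBasis {s : Set B | IsClopen s})
    (X : Set B) (hd : Dense X)
    (hext : ∀ g : X → Bool, Continuous g → ∃ G : B → Bool, Continuous G ∧ ∀ x : X, G x = g x) :
    (∀ p : B, ∃ I : Ideal (Cc X), I.IsMaximal ∧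
        (I : Set (Cc X)) =
          {f : Cc X | p ∈ closure (Subtype.val '' (((f : C(X, ℝ)) : X → ℝ) ⁻¹' {0}))}) ∧
    (∀ I : Ideal (Cc X), I.IsMaximal →
        ∃! p : B, (I : Set (Cc X)) =
          {f : Cc X | p ∈ closure (Subtype.val '' (((f : C(X, ℝ)) : X → ℝ) ⁻¹' {0}))}) := by
  refine ⟨fun p => ⟨CcGelfand.Mp hB hd hext p, CcGelfand.Mp_isMaximal hB hd hext p, rfl⟩, ?_⟩
  intro I hI
  obtain ⟨p, hp⟩ := CcGelfand.exists_mem_closure_zeros I hI.ne_top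
  have hIp : I = CcGelfand.Mp hB hd hext p :=
    hI.eq_of_le (CcGelfand.Mp_isMaximal hB hd hext p).ne_top hp
  refine ⟨p, congrArg (fun J : Ideal (Cc X) => (J : Set (Cc X))) hIp, ?_⟩
  intro q hq
  by_contra hne
  obtain ⟨V, hV, hpV, hVq⟩ := hB.exists_subset_of_mem_open
    (show p ∈ ({q}ᶜ : Set B) from fun h => hne h.symm) isOpen_compl_singleton
  have h1 : (1 - CcGelfand.clopenInd _ (CcGelfand.isClopen_trace hV) : Cc X) ∈ (I : Set (Cc X)) := by
    rw [hIp]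
    exact (CcGelfand.one_sub_clopenInd_mem_iff hd hV p).2 hpV
  rw [hq] at h1
  exact hVq ((CcGelfand.one_sub_clopenInd_mem_iff hd hV q).1 h1) rfl
end

section
/- Let X be a zero-dimensional space with Banaschewski compactification bX. A function f ∈ C_c(X) has compact support if and only if every point p ∈ bX ∖ X lies in the interior (taken in bX) of the closure (taken in bX) of Z(f); that is, C_c^K(X) = O_c^{bX∖X}. -/
open Set TopologicalSpace

/-!
If the support `K` of `f` is compact, it is closed in `B`, and its complement is an open set which
meets the dense set `X` only in zeros of `f`; hence it lies in `cl_B Z(f)` and contains `B ∖ X`.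
Conversely, the open set `int_B cl_B Z(f)` misses the cozero set of `f`, because `Z(f)` is closed
in `X`. If it contains `B ∖ X`, then the `B`-closure of the cozero set lies in `X`, so it is the
support of `f`, and it is compact as a closed subset of `B`.
-/

/-- For a zero-dimensional space `X` with Banaschewski compactification `B`,
a function `f ∈ C_c(X)` has compact support iff every `p ∈ B ∖ X` lies in
`int_B cl_B Z(f)`; i.e., `C_c^K(X) = O_c^{B∖X}`. -/
theorem stmt_3 {B : Type*} [TopologicalSpace B] [CompactSpace B] [T2Space B]
    (hB : IsTopologicalBasis {s : Set B | IsClopen s})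
    (X : Set B) (hd : Dense X)
    (hext : ∀ g : X → Bool, Continuous g → ∃ G : B → Bool, Continuous G ∧ ∀ x : X, G x = g x)
    (f : X → ℝ) (hf : Continuous f) (hfc : (Set.range f).Countable) :
    IsCompact (closure {x : X | f x ≠ 0}) ↔
      ∀ p ∈ Xᶜ, p ∈ interior (closure (Subtype.val '' (f ⁻¹' {0}))) := by
  have hind : Topology.IsInducing (Subtype.val : X → B) := Topology.IsInducing.subtypeVal
  constructor
  · intro hK p hp
    have hKB : IsClosed (Subtype.val '' closure {x : X | f x ≠ 0}) :=
      (hK.image continuous_subtype_val).isClosed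
    refine mem_interior.2 ⟨(Subtype.val '' closure {x : X | f x ≠ 0})ᶜ, ?_, hKB.isOpen_compl, ?_⟩
    · refine (hd.open_subset_closure_inter hKB.isOpen_compl).trans (closure_mono ?_)
      rintro x ⟨hxK, hxX⟩
      refine ⟨⟨x, hxX⟩, ?_, rfl⟩
      by_contra hne
      exact hxK ⟨⟨x, hxX⟩, subset_closure hne, rfl⟩
    · rintro ⟨x, -, rfl⟩
      exact hp x.2
  · intro h
    have hZ : IsClosed (f ⁻¹' {0}) := isClosed_singleton.preimage hf
    have hsub : closure (Subtype.val '' {x : X | f x ≠ 0}) ⊆ X := by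
      intro p hp
      by_contra hpX
      obtain ⟨_, hxU, x, hx, rfl⟩ := mem_closure_iff.1 hp _ isOpen_interior (h p hpX)
      have hxZ : x ∈ closure (f ⁻¹' {0}) := by
        rw [hind.closure_eq_preimage_closure_image]
        exact mem_preimage.2 (interior_subset hxU)
      rw [hZ.closure_eq] at hxZ
      exact hx hxZ
    rw [hind.isCompact_iff, hind.closure_eq_preimage_closure_image,
      image_preimage_eq_of_subset (by rwa [Subtype.range_coe])]
    exact isClosed_closure.isCompact
end

section
/- Let X be a zero-dimensional space with Banaschewski compactification bX, and let υX ⊆ bX be the copy of the N-compactification υ₀X of X inside bX. A subset A ⊆ X is relatively pseudocompact with respect to C_c(X) if and only if the closure of A in bX is contained in υX. -/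
/-!
Both directions pass between unbounded functions in `C_c(X)` and sequences of clopen sets of `B`
whose intersection misses `X`.

If `p ∈ closure A` is witnessed to lie outside `υX` by clopen neighborhoods `V n`, then
`x ↦ min {n | x ∉ V n}` is a continuous integer-valued function on `X`. A bound `N` for it on `A`
would make `A` miss the neighborhood `⋂ n ≤ N, V n` of `p`.

Conversely, let `f ∈ C_c(X)` be unbounded on `A`. Since the range of `f` is countable, there are
levels `r n ∈ (n, n + 1)` that `|f|` never attains, so the sets `{|f| > r n}` are clopen in `X` and
extend to clopen sets `V n` of `B`. By compactness some `p ∈ closure A` lies in every `V n`; a point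
of `X` in every `V n` would satisfy `|f| > n` for all `n`, hence `p ∉ υX`.
-/

open Set TopologicalSpace

/-- The copy of the `ℕ`-compactification `υ₀X` inside the Banaschewski compactification:
points all of whose countable families of clopen neighborhoods have intersection meeting `X`. -/
def upsilon {B : Type*} [TopologicalSpace B] (X : Set B) : Set B :=
  {p | ∀ V : ℕ → Set B, (∀ n, IsClopen (V n) ∧ p ∈ V n) → ((⋂ n, V n) ∩ X).Nonempty}

/-- The first exit index of a sequence of clopen sets with empty intersection is continuous. -/
lemma continuous_find_notMem {Y : Type*} [TopologicalSpace Y] (W : ℕ → Set Y)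
    (hW : ∀ n, IsClopen (W n)) (h : ∀ y, ∃ n, y ∉ W n) [∀ y, DecidablePred fun n => y ∉ W n] :
    Continuous fun y => Nat.find (h y) := by
  refine continuous_discrete_rng.2 fun n => ?_
  have : (fun y => Nat.find (h y)) ⁻¹' {n} = (W n)ᶜ ∩ ⋂ m ∈ Set.Iio n, W m := by
    ext y
    simp [Nat.find_eq_iff]
  rw [this]
  exact (hW n).compl.isOpen.inter
    ((Set.finite_Iio n).isOpen_biInter fun m _ => (hW m).isOpen)

/-- A strict superlevel set at a level that is never attained is clopen. -/
lemma isClopen_lt_of_notMem_range {Y : Type*} [TopologicalSpace Y] {g : Y → ℝ}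
    (hg : Continuous g) {r : ℝ} (hr : r ∉ Set.range g) : IsClopen {y | r < g y} := by
  refine ⟨?_, isOpen_lt continuous_const hg⟩
  have : {y | r < g y} = {y | r ≤ g y} := by
    ext y
    rw [mem_ofPred_eq, mem_ofPred_eq]
    exact ⟨le_of_lt, fun h => lt_of_le_of_ne h fun e => hr ⟨y, e.symm⟩⟩
  rw [this]
  exact isClosed_le continuous_const hg

/-- A subset `A ⊆ X` is relatively pseudocompact with respect to `C_c(X)`
iff `cl_B A ⊆ υX`. -/
theorem stmt_4 {B : Type*} [TopologicalSpace B] [CompactSpace B] [T2Space B]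
    (hB : IsTopologicalBasis {s : Set B | IsClopen s})
    (X : Set B) (hd : Dense X)
    (hext : ∀ g : X → Bool, Continuous g → ∃ G : B → Bool, Continuous G ∧ ∀ x : X, G x = g x)
    (A : Set X) :
    (∀ f : X → ℝ, Continuous f → (Set.range f).Countable →
        ∃ M : ℝ, ∀ x ∈ A, |f x| ≤ M) ↔
      closure (Subtype.val '' A) ⊆ upsilon X := by
  classical
  constructor
  · intro hA p hp V hV
    by_contra hne
    have hex : ∀ x : X, ∃ n, x ∉ (Subtype.val ⁻¹' V n : Set X) := by
      intro x
      by_contra! hx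
      exact hne ⟨x, mem_iInter.2 hx, x.2⟩
    have hc := continuous_find_notMem (fun n => (Subtype.val ⁻¹' V n : Set X))
      (fun n => (hV n).1.preimage continuous_subtype_val) hex
    obtain ⟨M, hM⟩ := hA (fun x => (Nat.find (hex x) : ℝ))
      (continuous_of_discreteTopology.comp hc)
      ((Set.countable_range (fun n : ℕ => (n : ℝ))).mono (by
        rintro _ ⟨x, rfl⟩
        exact ⟨_, rfl⟩))
    obtain ⟨N, hN⟩ := exists_nat_ge M
    obtain ⟨_, hyV, x, hxA, rfl⟩ := mem_closure_iff.1 hp (⋂ m ∈ Set.Iic N, V m)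
      ((Set.finite_Iic N).isOpen_biInter fun m _ => (hV m).1.isOpen)
      (mem_iInter₂.2 fun m _ => (hV m).2)
    have h1 : Nat.find (hex x) ≤ N := by
      have := (le_abs_self _).trans ((hM x hxA).trans hN)
      exact_mod_cast this
    exact Nat.find_spec (hex x) (mem_iInter₂.1 hyV _ h1)
  · intro hA f hf hcount
    by_contra! hub
    have hcount' : (Set.range fun x => |f x|).Countable := by
      have := hcount.image (fun t : ℝ => |t|)
      rwa [← Set.range_comp] at this
    have hr : ∀ n : ℕ, ∃ r : ℝ, r ∈ Set.Ioo (n : ℝ) (n + 1) ∧ r ∉ Set.range fun x => |f x| := by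
      intro n
      obtain ⟨r, hr, hr'⟩ := (hcount'.dense_compl ℝ).exists_mem_open isOpen_Ioo
        (⟨n + 1 / 2, by constructor <;> norm_num⟩ : (Set.Ioo (n : ℝ) (n + 1)).Nonempty)
      exact ⟨r, hr', hr⟩
    choose r hrI hrR using hr
    have hG : ∀ n, ∃ G : B → Bool, Continuous G ∧ ∀ x : X, G x = true ↔ r n < |f x| := by
      intro n
      obtain ⟨G, hG, hGx⟩ := hext (fun x => decide (r n < |f x|)) (by
        refine (continuous_bool_rng true).2 ?_
        convert isClopen_lt_of_notMem_range hf.abs (hrR n) using 1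
        ext x
        simp)
      exact ⟨G, hG, fun x => by simp [hGx]⟩
    choose G hGc hGx using hG
    have hmono : ∀ n, r n < r (n + 1) := fun n => by
      have h1 := (hrI n).2
      have h2 := (hrI (n + 1)).1
      push_cast at h2
      linarith
    obtain ⟨p, hp⟩ := IsCompact.nonempty_iInter_of_sequence_nonempty_isCompact_isClosed
      (fun n => closure (Subtype.val '' (A ∩ {x : X | r n < |f x|})))
      (fun n => closure_mono (image_mono (inter_subset_inter_right _
        fun x (hx : r (n + 1) < |f x|) => (hmono n).trans hx)))
      (fun n => by
        obtain ⟨x, hxA, hx⟩ := hub (r n)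
        exact ⟨x, subset_closure ⟨x, ⟨hxA, hx⟩, rfl⟩⟩)
      isClosed_closure.isCompact (fun n => isClosed_closure)
    rw [mem_iInter] at hp
    have hpA : p ∈ closure (Subtype.val '' A) :=
      closure_mono (image_mono inter_subset_left) (hp 0)
    obtain ⟨y, hyV, hyX⟩ := hA hpA (fun n => G n ⁻¹' {true}) (fun n => by
      have hcl : IsClopen (G n ⁻¹' {true}) := (isClopen_discrete _).preimage (hGc n)
      refine ⟨hcl, closure_minimal ?_ hcl.isClosed (hp n)⟩
      rintro _ ⟨x, ⟨-, hx⟩, rfl⟩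
      exact (hGx n x).2 hx)
    obtain ⟨n, hn⟩ := exists_nat_ge |f ⟨y, hyX⟩|
    have h1 := (hGx n ⟨y, hyX⟩).1 (mem_iInter.1 hyV n)
    have h2 := (hrI n).1
    linarith
end

section
/- Let X be a zero-dimensional space with Banaschewski compactification bX, and let υX ⊆ bX be the copy of the N-compactification υ₀X of X inside bX. For f ∈ C_c(X), if bX ∖ υX is contained in the closure (taken in bX) of Z(f), then bX ∖ υX is contained in the interior (taken in bX) of the closure (taken in bX) of Z(f). -/
/-!
Suppose `p ∉ υX` and `p` is not interior to `cl Z(f)`. Choose a decreasing sequence of clopen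
neighborhoods `V n` of `p` whose intersection misses `X`. Each `V n \ cl Z(f)` is a nonempty open
set, so it contains a point `x n ∈ X` together with a clopen set `W n ∋ x n`. Every point of `X`
has the neighborhood `(V N)ᶜ` for some `N`, which meets only finitely many of the `W n`; hence the
trace on `X` of the union of the `W n` is clopen in `X`, and its indicator extends to a continuous
`G : B → Bool`. A cluster point `q` of the sequence `x` lies in every `V n`, so `q ∉ υX` and
`q ∈ cl Z(f)` by hypothesis. But `G = true` along `x` while `G = false` on `Z(f)`, a contradiction.
-/

open Set TopologicalSpace

/-- For `f ∈ C_c(X)`, if `B ∖ υX ⊆ cl_B Z(f)` then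
`B ∖ υX ⊆ int_B cl_B Z(f)`. -/
theorem stmt_6 {B : Type*} [TopologicalSpace B] [CompactSpace B] [T2Space B]
    (hB : IsTopologicalBasis {s : Set B | IsClopen s})
    (X : Set B) (hd : Dense X)
    (hext : ∀ g : X → Bool, Continuous g → ∃ G : B → Bool, Continuous G ∧ ∀ x : X, G x = g x)
    (f : X → ℝ) (hf : Continuous f) (hfc : (Set.range f).Countable)
    (h : (upsilon X)ᶜ ⊆ closure (Subtype.val '' (f ⁻¹' {0}))) :
    (upsilon X)ᶜ ⊆ interior (closure (Subtype.val '' (f ⁻¹' {0}))) := by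
  intro p hp
  by_contra hint
  set Z : Set B := Subtype.val '' (f ⁻¹' {0})
  obtain ⟨V, hV, hpV, hanti, hVX⟩ : ∃ V : ℕ → Set B, (∀ n, IsClopen (V n)) ∧ (∀ n, p ∈ V n) ∧
      Antitone V ∧ ∀ x ∈ X, ∃ n, x ∉ V n := by
    simp only [upsilon, mem_compl_iff, mem_ofPred_eq, not_forall] at hp
    obtain ⟨U, hU, hUX⟩ := hp
    refine ⟨fun n => ⋂ k ∈ Finset.range (n + 1), U k,
      fun n => isClopen_biInter_finset fun k _ => (hU k).1,
      fun n => mem_iInter₂.2 fun k _ => (hU k).2, ?_, ?_⟩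
    · intro m n hmn
      refine biInter_subset_biInter_left fun k hk => ?_
      simp only [SetLike.mem_coe, Finset.mem_range] at hk ⊢
      omega
    · intro x hx
      by_contra! hall
      exact hUX ⟨x, mem_iInter.2 fun n => mem_iInter₂.1 (hall n) n (by simp), hx⟩
  have hex : ∀ n, ∃ x ∈ X, ∃ W : Set B, IsClopen W ∧ x ∈ W ∧ W ⊆ V n \ closure Z := by
    intro n
    have ho : IsOpen (V n \ closure Z) := (hV n).isOpen.sdiff isClosed_closure
    have hne : (V n \ closure Z).Nonempty := by
      rw [sdiff_nonempty]
      exact fun hsub => hint (mem_interior.2 ⟨V n, hsub, (hV n).isOpen, hpV n⟩)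
    obtain ⟨x, hx, hxX⟩ := hd.inter_open_nonempty _ ho hne
    obtain ⟨W, hW, hxW, hsub⟩ := hB.exists_subset_of_mem_open hx ho
    exact ⟨x, hxX, W, hW, hxW, hsub⟩
  choose x hxX W hW hxW hWV using hex
  have hlf : LocallyFinite fun n => (Subtype.val ⁻¹' W n : Set X) := by
    intro y
    obtain ⟨N, hN⟩ := hVX y y.2
    refine ⟨Subtype.val ⁻¹' (V N)ᶜ,
      ((hV N).compl.isOpen.preimage continuous_subtype_val).mem_nhds hN,
      (finite_lt_nat N).subset ?_⟩
    rintro n ⟨z, hzW, hzN⟩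
    by_contra hn
    exact hzN (hanti (not_lt.1 hn) (hWV n hzW).1)
  have hclopen : IsClopen (⋃ n, (Subtype.val ⁻¹' W n : Set X)) :=
    ⟨hlf.isClosed_iUnion fun n => (hW n).isClosed.preimage continuous_subtype_val,
      isOpen_iUnion fun n => (hW n).isOpen.preimage continuous_subtype_val⟩
  obtain ⟨G, hG, hGX⟩ := hext _ ((continuous_boolIndicator_iff_isClopen _).2 hclopen)
  have hGx : ∀ n, G (x n) = true := fun n => by
    rw [hGX ⟨x n, hxX n⟩]
    exact (mem_iff_boolIndicator _ _).1 (mem_iUnion.2 ⟨n, hxW n⟩)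
  have hGZ : closure Z ⊆ G ⁻¹' {false} := by
    refine closure_minimal ?_ ((isClosed_discrete _).preimage hG)
    rintro _ ⟨z, hz, rfl⟩
    rw [mem_preimage, hGX z, mem_singleton_iff, ← notMem_iff_boolIndicator, mem_iUnion]
    rintro ⟨n, hn⟩
    exact (hWV n hn).2 (subset_closure ⟨z, hz, rfl⟩)
  obtain ⟨q, hq⟩ := exists_clusterPt_of_compactSpace (Filter.map x Filter.atTop)
  have hmem : ∀ s : Set B, IsClosed s → (∀ᶠ n in Filter.atTop, x n ∈ s) → q ∈ s :=
    fun s hs he => hs.closure_subset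
      (mem_closure_iff_clusterPt.2 (hq.mono (Filter.le_principal_iff.2 he)))
  have hqV : ∀ n, q ∈ V n := fun n => hmem _ (hV n).isClosed <| by
    filter_upwards [Filter.eventually_ge_atTop n] with m hm
    exact hanti hm (hWV m (hxW m)).1
  have hqG : G q = true :=
    hmem (G ⁻¹' {true}) ((isClosed_discrete _).preimage hG) (Filter.Eventually.of_forall hGx)
  have hqu : q ∈ (upsilon X)ᶜ := by
    intro hqu
    obtain ⟨y, hy, hyX⟩ := hqu V fun n => ⟨hV n, hqV n⟩
    obtain ⟨n, hn⟩ := hVX y hyX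
    exact hn (mem_iInter.1 hy n)
  have hqF : G q = false := hGZ (h hqu)
  simp [hqG] at hqF
end

section
/- Let X be a zero-dimensional space with Banaschewski compactification bX, and let υX ⊆ bX be the copy of the N-compactification υ₀X of X inside bX. For f ∈ C_c(X), the following are equivalent: (i) the support cl_X(X ∖ Z(f)) is pseudocompact; (ii) bX ∖ υX is contained in the closure in bX of Z(f); (iii) bX ∖ υX is contained in the interior in bX of the closure in bX of Z(f). In other words, C_c^ψ(X) = M_c^{bX∖υX} = O_c^{bX∖υX}. -/
open Set TopologicalSpace

/-!
The implications proved are (i) ⇒ (iii) and (ii) ⇒ (i); (iii) ⇒ (ii) is trivial.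

(i) ⇒ (iii): if `p ∉ υX`, there are clopen neighborhoods `V n` of `p` with no common point in `X`.
Sending `x` to the least `n` with `x ∉ V n` is a locally constant function on `X`, hence bounded on
the pseudocompact support. So some finite intersection `⋂ k ≤ n, V k` misses the support; its trace
on `X` lies in `Z(f)`, and as `X` is dense it is a neighborhood of `p` inside `cl Z(f)`.

(ii) ⇒ (i): an unbounded continuous `h` on the support yields nonempty clopen subsets `W n` of `X`
inside `{f ≠ 0} ∩ {|h| > n}`. They form a locally finite family, so each tail union
`⋃ k, W (n + k)` is clopen in `X` and extends to a clopen `V n` of `B`. By compactness the `V n`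
have a common point `p`; they have none in `X`, so `p ∉ υX`, while `V 0` separates `p` from `Z(f)`.
-/

/-- Pseudocompactness of the support puts every point outside `υX` in the interior of the closure
of the zero-set. -/
lemma compl_upsilon_subset_interior {B : Type*} [TopologicalSpace B]
    (X : Set B) (hd : Dense X) (f : X → ℝ)
    (hps : ∀ h : (closure {x : X | f x ≠ 0}) → ℝ, Continuous h → ∃ M : ℝ, ∀ y, |h y| ≤ M) :
    (upsilon X)ᶜ ⊆ interior (closure (Subtype.val '' (f ⁻¹' {0}))) := by
  classical
  intro p hp
  simp only [upsilon, mem_compl_iff, mem_ofPred_eq, not_forall] at hp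
  obtain ⟨V, hV, hne⟩ := hp
  have hex : ∀ x : X, ∃ n, (x : B) ∉ V n := by
    intro x
    by_contra! hx
    exact hne ⟨x, mem_iInter.2 hx, x.2⟩
  let e : X → ℕ := fun x => Nat.find (hex x)
  have he : IsLocallyConstant e := by
    rw [IsLocallyConstant.iff_eventually_eq]
    intro x
    have h1 : ∀ᶠ y : X in nhds x, (y : B) ∉ V (e x) :=
      continuous_subtype_val.continuousAt.eventually
        ((hV (e x)).1.compl.isOpen.eventually_mem (Nat.find_spec (hex x)))
    have h2 : ∀ᶠ y : X in nhds x, ∀ k ∈ Finset.range (e x), (y : B) ∈ V k := by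
      rw [Filter.eventually_all_finset]
      intro k hk
      refine continuous_subtype_val.continuousAt.eventually ((hV k).1.isOpen.eventually_mem ?_)
      exact not_not.1 (Nat.find_min (hex x) (Finset.mem_range.1 hk))
    filter_upwards [h1, h2] with y hy1 hy2
    refine (Nat.find_eq_iff (hex y)).2 ⟨hy1, fun k hk => ?_⟩
    exact not_not.2 (hy2 k (Finset.mem_range.2 hk))
  obtain ⟨M, hM⟩ := hps (fun y => (e y.1 : ℝ))
    (continuous_of_discreteTopology.comp (he.continuous.comp continuous_subtype_val))
  obtain ⟨N, hN⟩ := exists_nat_gt M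
  let U : Set B := ⋂ k ∈ Finset.range N, V k
  have hUo : IsOpen U := isOpen_biInter_finset fun k _ => (hV k).1.isOpen
  have hpU : p ∈ U := mem_iInter₂.2 fun k _ => (hV k).2
  refine mem_interior.2 ⟨U, ?_, hUo, hpU⟩
  refine (hd.open_subset_closure_inter hUo).trans (closure_mono ?_)
  rintro x ⟨hxU, hxX⟩
  refine ⟨⟨x, hxX⟩, ?_, rfl⟩
  by_contra hfx
  have h1 := hM ⟨⟨x, hxX⟩, subset_closure hfx⟩
  have h2 : N ≤ e ⟨x, hxX⟩ := by
    refine (Nat.le_find_iff _ _).2 fun k hk => not_not.2 ?_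
    exact mem_iInter₂.1 hxU k (Finset.mem_range.2 hk)
  have h3 : (N : ℝ) ≤ e ⟨x, hxX⟩ := by exact_mod_cast h2
  rw [Nat.abs_cast] at h1
  linarith

/-- If every point outside `υX` lies in the closure of the zero-set, the support is
pseudocompact. -/
lemma pseudocompact_of_compl_upsilon_subset {B : Type*} [TopologicalSpace B] [CompactSpace B]
    (hB : IsTopologicalBasis {s : Set B | IsClopen s}) (X : Set B)
    (hext : ∀ g : X → Bool, Continuous g → ∃ G : B → Bool, Continuous G ∧ ∀ x : X, G x = g x)
    (f : X → ℝ) (hf : Continuous f)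
    (hsub : (upsilon X)ᶜ ⊆ closure (Subtype.val '' (f ⁻¹' {0})))
    (h : (closure {x : X | f x ≠ 0}) → ℝ) (hh : Continuous h) : ∃ M : ℝ, ∀ y, |h y| ≤ M := by
  classical
  by_contra! hunb
  have hcoz : IsOpen {x : X | f x ≠ 0} := isOpen_ne_fun hf continuous_const
  have hW : ∀ n : ℕ, ∃ W : Set X, IsClopen W ∧ W.Nonempty ∧
      ∀ x ∈ W, f x ≠ 0 ∧ ∃ hx : x ∈ closure {x : X | f x ≠ 0}, (n : ℝ) < |h ⟨x, hx⟩| := by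
    intro n
    obtain ⟨O, hO, hOe⟩ := isOpen_induced_iff.1 (isOpen_lt (continuous_const (y := (n : ℝ))) hh.abs)
    obtain ⟨y, hy⟩ := hunb n
    have hyO : y.1 ∈ O := by
      have : y ∈ Subtype.val ⁻¹' O := hOe ▸ hy
      exact this
    obtain ⟨x, hxO, hxf⟩ := mem_closure_iff.1 y.2 O hO hyO
    obtain ⟨O', hO', hOe'⟩ := isOpen_induced_iff.1 (hO.inter hcoz)
    have hxO' : (x : B) ∈ O' := by
      have : x ∈ Subtype.val ⁻¹' O' := hOe' ▸ ⟨hxO, hxf⟩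
      exact this
    obtain ⟨C, hC, hxC, hCO⟩ := hB.exists_subset_of_mem_open hxO' hO'
    refine ⟨Subtype.val ⁻¹' C, IsClopen.preimage hC continuous_subtype_val, ⟨x, hxC⟩, ?_⟩
    intro z hz
    have hz' : z ∈ O ∩ {x : X | f x ≠ 0} := hOe' ▸ (hCO hz : z ∈ Subtype.val ⁻¹' O')
    refine ⟨hz'.2, subset_closure hz'.2, ?_⟩
    have : (⟨z, subset_closure hz'.2⟩ : closure {x : X | f x ≠ 0}) ∈ Subtype.val ⁻¹' O := hz'.1
    rw [hOe] at this
    exact this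
  choose W hWc hWne hWh using hW
  have hlf : LocallyFinite W := by
    intro x
    by_cases hx : x ∈ closure {x : X | f x ≠ 0}
    · obtain ⟨N, hN⟩ := exists_nat_gt |h ⟨x, hx⟩|
      obtain ⟨O, hO, hOe⟩ :=
        isOpen_induced_iff.1 (isOpen_lt hh.abs (continuous_const (y := (N : ℝ))))
      have hxO : (⟨x, hx⟩ : closure {x : X | f x ≠ 0}) ∈ Subtype.val ⁻¹' O := hOe ▸ hN
      refine ⟨O, hO.mem_nhds hxO, (finite_lt_nat N).subset ?_⟩
      rintro k ⟨z, hzW, hzO⟩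
      obtain ⟨-, hz, hkz⟩ := hWh k z hzW
      have hzN : (⟨z, hz⟩ : closure {x : X | f x ≠ 0}) ∈ Subtype.val ⁻¹' O := hzO
      rw [hOe] at hzN
      exact_mod_cast hkz.trans hzN
    · refine ⟨(closure {x : X | f x ≠ 0})ᶜ, isClosed_closure.isOpen_compl.mem_nhds hx,
        finite_empty.subset ?_⟩
      rintro k ⟨z, hzW, hz⟩
      exact hz (hWh k z hzW).2.1
  have hV : ∀ n : ℕ, ∃ V : Set B, IsClopen V ∧ ∀ x : X, (x : B) ∈ V ↔ ∃ k, x ∈ W (n + k) := by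
    intro n
    have hc : IsClopen (⋃ k, W (n + k)) :=
      ⟨(hlf.comp_injective (add_right_injective n)).isClosed_iUnion fun k => (hWc _).isClosed,
        isOpen_iUnion fun k => (hWc _).isOpen⟩
    obtain ⟨G, hG, hGe⟩ := hext _ ((continuous_boolIndicator_iff_isClopen _).2 hc)
    refine ⟨G ⁻¹' {true}, (isClopen_discrete _).preimage hG, fun x => ?_⟩
    rw [mem_preimage, mem_singleton_iff, hGe, ← mem_iff_boolIndicator, mem_iUnion]
  choose V hVc hVX using hV
  obtain ⟨p, -, hp⟩ := isCompact_univ.inter_iInter_nonempty V (fun n => (hVc n).isClosed) (by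
    intro u
    obtain ⟨x, hx⟩ := hWne (u.sup id)
    refine ⟨x, mem_univ _, mem_iInter₂.2 fun n hn => (hVX n x).2 ⟨u.sup id - n, ?_⟩⟩
    have hle : n ≤ u.sup id := Finset.le_sup (f := id) hn
    rwa [Nat.add_sub_cancel' hle])
  have hpu : p ∉ upsilon X := by
    intro hpu
    obtain ⟨x, hx, hxX⟩ := hpu V fun n => ⟨hVc n, mem_iInter.1 hp n⟩
    have key : ∀ n : ℕ, ∃ hx : (⟨x, hxX⟩ : X) ∈ closure {x : X | f x ≠ 0},
        (n : ℝ) < |h ⟨_, hx⟩| := by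
      intro n
      obtain ⟨k, hk⟩ := (hVX n ⟨x, hxX⟩).1 (mem_iInter.1 hx n)
      obtain ⟨-, hS, hlt⟩ := hWh _ _ hk
      refine ⟨hS, lt_of_le_of_lt ?_ hlt⟩
      exact_mod_cast Nat.le_add_right n k
    obtain ⟨hS, -⟩ := key 0
    obtain ⟨N, hN⟩ := exists_nat_gt |h ⟨_, hS⟩|
    obtain ⟨_, hN'⟩ := key N
    exact lt_asymm hN hN'
  obtain ⟨_, hzV, z, hz, rfl⟩ :=
    mem_closure_iff.1 (hsub hpu) (V 0) (hVc 0).isOpen (mem_iInter.1 hp 0)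
  obtain ⟨k, hk⟩ := (hVX 0 z).1 hzV
  exact (hWh _ _ hk).1 hz

/-- For `f ∈ C_c(X)`, the following are equivalent:
(i) the support `cl_X (X ∖ Z(f))` is pseudocompact;
(ii) `B ∖ υX ⊆ cl_B Z(f)`;
(iii) `B ∖ υX ⊆ int_B cl_B Z(f)`.
That is, `C_c^ψ(X) = M_c^{B∖υX} = O_c^{B∖υX}`. -/
theorem stmt_7 {B : Type*} [TopologicalSpace B] [CompactSpace B] [T2Space B]
    (hB : IsTopologicalBasis {s : Set B | IsClopen s})
    (X : Set B) (hd : Dense X)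
    (hext : ∀ g : X → Bool, Continuous g → ∃ G : B → Bool, Continuous G ∧ ∀ x : X, G x = g x)
    (f : X → ℝ) (hf : Continuous f) (hfc : (Set.range f).Countable) :
    ((∀ h : (closure {x : X | f x ≠ 0}) → ℝ, Continuous h → ∃ M : ℝ, ∀ y, |h y| ≤ M) ↔
        (upsilon X)ᶜ ⊆ closure (Subtype.val '' (f ⁻¹' {0}))) ∧
    ((upsilon X)ᶜ ⊆ closure (Subtype.val '' (f ⁻¹' {0})) ↔
        (upsilon X)ᶜ ⊆ interior (closure (Subtype.val '' (f ⁻¹' {0})))) := by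
  have h13 := compl_upsilon_subset_interior X hd f
  have h21 := pseudocompact_of_compl_upsilon_subset hB X hext f hf
  exact ⟨⟨fun h => (h13 h).trans interior_subset, h21⟩,
    ⟨fun h => h13 (h21 h), fun h => h.trans interior_subset⟩⟩
end

section
/- Let X be an N-compact zero-dimensional space with Banaschewski compactification bX. Then a function f ∈ C_c(X) has compact support if and only if every point p ∈ bX ∖ X lies in the closure (taken in bX) of Z(f); that is, C_c^K(X) = M_c^{bX∖X}, so the set of functions in C_c(X) with compact support equals the intersection of all free maximal ideals of C_c(X). -/
/-!
If the support of `f` is compact, it is closed in `B` and misses `B ∖ X`; as `Z(f)` and the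
support cover the dense set `X`, each point of `B ∖ X` lies in `cl_B Z(f)`.

Conversely, let `B ∖ X ⊆ cl_B Z(f)`. A clopen `C ⊆ X` disjoint from `Z(f)` extends to a clopen
subset of `B` disjoint from `cl_B Z(f)`, which is therefore contained in `X`; so `C` is compact
(`isCompact_of_isClopen_of_disjoint`). Given a continuous `n : X → ℕ`, a clopen neighbourhood
inside the cozero set of `f` chosen in each fibre of `n` that meets this set gives a clopen `C`
on which `n` takes all its values on the cozero set. As `C` is compact, `n` is bounded on the
cozero set (`finite_image_cozero`). Applied to all coordinates of a closed embedding into `ℕ^ι`,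
this puts the support inside the preimage of a product of finite sets, which is compact.
-/

open Set TopologicalSpace

universe u v

/-- A clopen subset of `X` disjoint from a set `Z` whose closure in `B` covers `B ∖ X`
is compact: its clopen extension to `B` stays inside `X`. -/
theorem isCompact_of_isClopen_of_disjoint {B : Type u} [TopologicalSpace B] [CompactSpace B]
    {X : Set B}
    (hext : ∀ g : X → Bool, Continuous g → ∃ G : B → Bool, Continuous G ∧ ∀ x : X, G x = g x)
    {Z C : Set X} (hZ : ∀ p ∈ Xᶜ, p ∈ closure (Subtype.val '' Z))
    (hC : IsClopen C) (hCZ : Disjoint C Z) : IsCompact C := by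
  classical
  obtain ⟨G, hG, hGg⟩ := hext (fun x => decide (x ∈ C))
    ((continuous_bool_rng true).2 (by convert hC using 1; ext x; simp))
  have hK : IsClopen (G ⁻¹' {true}) := (isClopen_discrete {true}).preimage hG
  have hmem : ∀ x : X, (x : B) ∈ G ⁻¹' {true} ↔ x ∈ C := fun x => by simp [hGg]
  have hKX : G ⁻¹' {true} ⊆ X := by
    intro p hp
    by_contra hpX
    obtain ⟨_, hy, z, hz, rfl⟩ := mem_closure_iff.1 (hZ p hpX) _ hK.isOpen hp
    exact disjoint_left.1 hCZ ((hmem z).1 hy) hz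
  rw [Subtype.isCompact_iff]
  convert hK.isClosed.isCompact using 1
  ext p
  constructor
  · rintro ⟨x, hx, rfl⟩
    exact (hmem x).2 hx
  · intro hp
    exact ⟨⟨p, hKX hp⟩, (hmem ⟨p, hKX hp⟩).1 hp, rfl⟩

theorem finite_image_cozero {B : Type u} [TopologicalSpace B] [CompactSpace B]
    (hB : IsTopologicalBasis {s : Set B | IsClopen s}) {X : Set B}
    (hext : ∀ g : X → Bool, Continuous g → ∃ G : B → Bool, Continuous G ∧ ∀ x : X, G x = g x)
    {f : X → ℝ} (hf : Continuous f)
    (hZ : ∀ p ∈ Xᶜ, p ∈ closure (Subtype.val '' (f ⁻¹' {0})))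
    {n : X → ℕ} (hn : Continuous n) : (n '' {x : X | f x ≠ 0}).Finite := by
  have hopen : IsOpen {x : X | f x ≠ 0} := isOpen_ne_fun hf continuous_const
  have hU : ∀ m : ℕ, ∃ U : Set X, IsClopen U ∧ U ⊆ {x | f x ≠ 0} ∧
      (m ∈ n '' {x : X | f x ≠ 0} → ∃ x ∈ U, n x = m) := by
    intro m
    by_cases hm : m ∈ n '' {x : X | f x ≠ 0}
    · obtain ⟨x, hx, rfl⟩ := hm
      obtain ⟨O, hO, hOeq⟩ := isOpen_induced_iff.1 hopen
      have hxO : (x : B) ∈ O := by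
        change x ∈ Subtype.val ⁻¹' O
        rw [hOeq]
        exact hx
      obtain ⟨U, hUc, hxU, hUO⟩ := hB.exists_subset_of_mem_open hxO hO
      exact ⟨Subtype.val ⁻¹' U, IsClopen.preimage hUc continuous_subtype_val,
        hOeq ▸ preimage_mono hUO, fun _ => ⟨x, hxU, rfl⟩⟩
    · exact ⟨∅, isClopen_empty, empty_subset _, fun h => absurd h hm⟩
  choose U hUc hUf hUm using hU
  -- The fibres of `n` form a clopen partition, so gluing one clopen set per fibre is clopen.
  have glue : ∀ V : ℕ → Set X, (∀ m, IsOpen (V m)) → IsOpen {x | x ∈ V (n x)} := by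
    intro V hV
    have : {x | x ∈ V (n x)} = ⋃ m, n ⁻¹' {m} ∩ V m := by ext x; simp
    rw [this]
    exact isOpen_iUnion fun m => ((isOpen_discrete {m}).preimage hn).inter (hV m)
  have hC : IsClopen {x | x ∈ U (n x)} :=
    ⟨⟨glue (fun m => (U m)ᶜ) fun m => (hUc m).compl.isOpen⟩, glue U fun m => (hUc m).isOpen⟩
  have hcomp := isCompact_of_isClopen_of_disjoint hext hZ hC
    (disjoint_left.2 fun x hx hx0 => hUf _ hx hx0)
  refine (hcomp.image hn).finite_of_discrete.subset fun m hm => ?_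
  obtain ⟨x, hx, rfl⟩ := hUm m hm
  exact ⟨x, hx, rfl⟩

/-- If `X` is `ℕ`-compact (a closed subspace of some power of the discrete
space `ℕ`) and zero-dimensional with Banaschewski compactification `B`, then
`f ∈ C_c(X)` has compact support iff every `p ∈ B ∖ X` lies in `cl_B Z(f)`;
that is, `C_c^K(X) = M_c^{B∖X}`, the intersection of all free maximal ideals of `C_c(X)`. -/
theorem stmt_8 {B : Type u} [TopologicalSpace B] [CompactSpace B] [T2Space B]
    (hB : IsTopologicalBasis {s : Set B | IsClopen s})
    (X : Set B) (hd : Dense X)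
    (hext : ∀ g : X → Bool, Continuous g → ∃ G : B → Bool, Continuous G ∧ ∀ x : X, G x = g x)
    (hN : ∃ (ι : Type v) (e : X → (ι → ℕ)), Topology.IsClosedEmbedding e)
    (f : X → ℝ) (hf : Continuous f) (hfc : (Set.range f).Countable) :
    IsCompact (closure {x : X | f x ≠ 0}) ↔
      ∀ p ∈ Xᶜ, p ∈ closure (Subtype.val '' (f ⁻¹' {0})) := by
  constructor
  · intro hK p hp
    have hcl : IsClosed (Subtype.val '' closure {x : X | f x ≠ 0}) :=
      (hK.image continuous_subtype_val).isClosed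
    have hsub : X ⊆ Subtype.val '' (f ⁻¹' {0}) ∪ Subtype.val '' closure {x : X | f x ≠ 0} := by
      intro x hx
      by_cases h : f ⟨x, hx⟩ = 0
      · exact Or.inl ⟨⟨x, hx⟩, h, rfl⟩
      · exact Or.inr ⟨⟨x, hx⟩, subset_closure h, rfl⟩
    have hpc := closure_mono hsub (hd p)
    rw [closure_union, hcl.closure_eq] at hpc
    rcases hpc with h | ⟨x, -, rfl⟩
    · exact h
    · exact absurd x.2 hp
  · intro hZ
    obtain ⟨ι, e, he⟩ := hN
    have hei : ∀ i, Continuous fun x => e x i := fun i =>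
      (continuous_apply i).comp he.continuous
    have hfin := fun i => finite_image_cozero hB hext hf hZ (hei i)
    have hP : IsCompact (univ.pi fun i => (fun x => e x i) '' {x : X | f x ≠ 0}) :=
      isCompact_univ_pi fun i => (hfin i).isCompact
    refine (he.isCompact_preimage hP).of_isClosed_subset isClosed_closure
      (closure_minimal ?_ (hP.isClosed.preimage he.continuous))
    exact fun x hx i _ => ⟨x, hx, rfl⟩
end

section
/- Let X be a zero-dimensional space with Banaschewski compactification bX. Then X is pseudocompact if and only if υX = bX, i.e., if and only if for every point p ∈ bX and every sequence (V_n) of clopen neighborhoods of p in bX, the intersection (⋂_n V_n) ∩ X is nonempty. -/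
/-!
If clopen neighborhoods `V n` of `p` have an intersection missing `X`, then the function sending
`x ∈ X` to the least `n` with `x ∉ V n` is locally constant on `X`, and it is unbounded because each
finite intersection of the `V n` is a neighborhood of `p` and so meets the dense set `X`.

Conversely, let `f` be continuous and unbounded on `X`. Choose `x n` with `n < |f (x n)|` and a clopen
neighborhood `U n ⊆ {n < |f|}` of `x n` in `X`. The family `U` is locally finite, so the tails
`W n = ⋃ k ≥ n, U k` are clopen in `X`; they decrease, are nonempty, and have empty intersection.
Their clopen extensions to the compactification decrease as well, by density of `X`, so by
compactness they have a common point, and this point is not in `υX`.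
-/

open Set TopologicalSpace

/-- An unbounded continuous function on a space with a basis of clopen sets yields a decreasing
sequence of nonempty clopen sets with empty intersection. -/
lemma exists_clopen_antitone_of_unbounded {Y : Type*} [TopologicalSpace Y]
    (hY : IsTopologicalBasis {s : Set Y | IsClopen s}) (f : Y → ℝ) (hf : Continuous f)
    (hunb : ∀ M : ℝ, ∃ x, M < |f x|) :
    ∃ W : ℕ → Set Y, (∀ n, IsClopen (W n)) ∧ Antitone W ∧ (∀ n, (W n).Nonempty) ∧
      ⋂ n, W n = ∅ := by
  choose x hx using fun n : ℕ => hunb n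
  have hU : ∀ n : ℕ, ∃ U : Set Y, IsClopen U ∧ x n ∈ U ∧ U ⊆ {y | (n : ℝ) < |f y|} := by
    intro n
    obtain ⟨U, hU, hxU, hsub⟩ := hY.exists_subset_of_mem_open (a := x n)
      (u := {y | (n : ℝ) < |f y|}) (hx n) (isOpen_lt continuous_const hf.abs)
    exact ⟨U, hU, hxU, hsub⟩
  choose U hUc hxU hUsub using hU
  have hlf : LocallyFinite U := by
    intro y
    obtain ⟨N, hN⟩ := exists_nat_gt |f y|
    refine ⟨{z | |f z| < N}, (isOpen_lt hf.abs continuous_const).mem_nhds hN, ?_⟩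
    refine (Set.finite_lt_nat N).subset ?_
    rintro n ⟨z, hz, hzN⟩
    have h1 : (n : ℝ) < |f z| := hUsub n hz
    have h2 : |f z| < N := hzN
    exact_mod_cast h1.trans h2
  refine ⟨fun n => ⋃ k : {k // n ≤ k}, U k, fun n => ⟨?_, ?_⟩, ?_, ?_, ?_⟩
  · exact (hlf.comp_injective Subtype.val_injective).isClosed_iUnion fun k => (hUc k).1
  · exact isOpen_iUnion fun k => (hUc k).2
  · intro m n hmn y hy
    obtain ⟨k, hk⟩ := mem_iUnion.1 hy
    exact mem_iUnion.2 ⟨⟨k, hmn.trans k.2⟩, hk⟩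
  · exact fun n => ⟨x n, mem_iUnion.2 ⟨⟨n, le_rfl⟩, hxU n⟩⟩
  · refine eq_empty_of_forall_notMem fun y hy => ?_
    obtain ⟨N, hN⟩ := exists_nat_gt |f y|
    obtain ⟨k, hk⟩ := mem_iUnion.1 (mem_iInter.1 hy N)
    have h1 : ((k : ℕ) : ℝ) < |f y| := hUsub k hk
    have h2 : (N : ℝ) ≤ (k : ℕ) := by exact_mod_cast k.2
    linarith

/-- `X` is pseudocompact iff `υX = B`. -/
theorem stmt_9 {B : Type*} [TopologicalSpace B] [CompactSpace B] [T2Space B]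
    (hB : IsTopologicalBasis {s : Set B | IsClopen s})
    (X : Set B) (hd : Dense X)
    (hext : ∀ g : X → Bool, Continuous g → ∃ G : B → Bool, Continuous G ∧ ∀ x : X, G x = g x) :
    (∀ f : X → ℝ, Continuous f → ∃ M : ℝ, ∀ x, |f x| ≤ M) ↔ upsilon X = Set.univ := by
  classical
  constructor
  · intro hps
    refine eq_univ_of_forall fun p V hV => ?_
    by_contra hne
    have hex : ∀ x : X, ∃ n, (x : B) ∉ V n := by
      intro x
      by_contra! h
      exact hne ⟨x, mem_iInter.2 h, x.2⟩
    have hlc : IsLocallyConstant fun x : X => Nat.find (hex x) := by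
      refine (IsLocallyConstant.iff_exists_open _).2 fun x => ?_
      refine ⟨Subtype.val ⁻¹' ((V (Nat.find (hex x)))ᶜ ∩
        ⋂ k ∈ Finset.range (Nat.find (hex x)), V k), ?_, ?_, ?_⟩
      · exact ((hV _).1.compl.isOpen.inter
          (isOpen_biInter_finset fun k _ => (hV k).1.isOpen)).preimage continuous_subtype_val
      · refine ⟨Nat.find_spec (hex x), mem_iInter₂.2 fun k hk => ?_⟩
        exact not_not.1 (Nat.find_min (hex x) (Finset.mem_range.1 hk))
      · rintro y ⟨hy1, hy2⟩
        refine (Nat.find_eq_iff _).2 ⟨hy1, fun k hk => not_not.2 ?_⟩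
        exact mem_iInter₂.1 hy2 k (Finset.mem_range.2 hk)
    obtain ⟨M, hM⟩ := hps (fun x => ((Nat.find (hex x) : ℕ) : ℝ))
      ((hlc.comp (fun n : ℕ => (n : ℝ))).continuous)
    obtain ⟨N, hN⟩ := exists_nat_gt M
    obtain ⟨x, hx, hxX⟩ := hd.inter_open_nonempty (⋂ k ∈ Finset.range N, V k)
      (isOpen_biInter_finset fun k _ => (hV k).1.isOpen)
      ⟨p, mem_iInter₂.2 fun k _ => (hV k).2⟩
    have h1 : N ≤ Nat.find (hex ⟨x, hxX⟩) := by
      refine (Nat.le_find_iff _ _).2 fun k hk => not_not.2 ?_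
      exact mem_iInter₂.1 hx k (Finset.mem_range.2 hk)
    have h2 := (le_abs_self _).trans (hM ⟨x, hxX⟩)
    have h3 : (N : ℝ) ≤ (Nat.find (hex ⟨x, hxX⟩) : ℕ) := by exact_mod_cast h1
    linarith
  · intro hu f hf
    by_contra! hunb
    have hY : IsTopologicalBasis {s : Set X | IsClopen s} := by
      refine isTopologicalBasis_of_isOpen_of_nhds (fun s hs => hs.2) ?_
      intro x u hxu hu
      obtain ⟨O, hO, rfl⟩ := isOpen_induced_iff.1 hu
      obtain ⟨V, hV, hxV, hVO⟩ := hB.exists_subset_of_mem_open (a := (x : B)) hxu hO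
      exact ⟨Subtype.val ⁻¹' V, IsClopen.preimage hV continuous_subtype_val, hxV,
        preimage_mono hVO⟩
    obtain ⟨W, hWc, hWa, hWn, hWe⟩ := exists_clopen_antitone_of_unbounded hY f hf hunb
    have hV : ∀ n, ∃ V : Set B, IsClopen V ∧ ∀ x : X, (x : B) ∈ V ↔ x ∈ W n := by
      intro n
      obtain ⟨G, hG, hGx⟩ := hext (W n).boolIndicator
        ((continuous_boolIndicator_iff_isClopen _).2 (hWc n))
      refine ⟨G ⁻¹' {true}, (isClopen_discrete _).preimage hG, fun x => ?_⟩
      rw [mem_preimage, mem_singleton_iff, hGx x, ← mem_iff_boolIndicator]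
    choose V hVc hVW using hV
    have hVa : ∀ n, V (n + 1) ⊆ V n := by
      intro n
      by_contra hns
      obtain ⟨b, hb1, hb2⟩ := not_subset.1 hns
      obtain ⟨x, ⟨hx1, hx2⟩, hxX⟩ := hd.inter_open_nonempty (V (n + 1) ∩ (V n)ᶜ)
        ((hVc _).isOpen.inter (hVc n).compl.isOpen) ⟨b, hb1, hb2⟩
      exact hx2 ((hVW n ⟨x, hxX⟩).2 (hWa n.le_succ ((hVW (n + 1) ⟨x, hxX⟩).1 hx1)))
    obtain ⟨p, hp⟩ := IsCompact.nonempty_iInter_of_sequence_nonempty_isCompact_isClosed V hVa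
      (fun n => (hWn n).elim fun x hx => ⟨x, (hVW n x).2 hx⟩)
      (hVc 0).isClosed.isCompact (fun n => (hVc n).isClosed)
    have hpu : p ∈ upsilon X := hu ▸ mem_univ p
    obtain ⟨x, hx, hxX⟩ := hpu V fun n => ⟨hVc n, mem_iInter.1 hp n⟩
    have : (⟨x, hxX⟩ : X) ∈ ⋂ n, W n :=
      mem_iInter.2 fun n => (hVW n ⟨x, hxX⟩).1 (mem_iInter.1 hx n)
    rw [hWe] at this
    exact this
end

section
/- Let X be a zero-dimensional space with Banaschewski compactification bX. No point p ∈ bX ∖ X is a G_δ point of bX; that is, for p ∈ bX ∖ X, the singleton {p} is not the intersection of countably many open subsets of bX. -/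
open Set TopologicalSpace

/-!
Suppose `p ∉ X` and `{p}` is a countable intersection of open sets. Since `X` is dense and misses
`p`, the point `p` is not isolated, so there is a strictly decreasing sequence of clopen sets `V n`
with `V 0 = B` and intersection `{p}` (`exists_strict_clopen_seq`). The nonempty clopen shells
`V n \ V (n + 1)` partition `B \ {p}`, so the parity of the shell index is a continuous function
`X → Bool`. By compactness the `V n` form a neighbourhood basis at `p`, hence every neighbourhood
of `p` contains shells of both parities; each of them meets `X`, so the parity function has no
continuous extension at `p`.
-/

/-- A non-isolated `G_δ` point of a space with a clopen basis is the intersection of a strictly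
decreasing sequence of clopen sets starting at the whole space. -/
lemma exists_strict_clopen_seq {B : Type*} [TopologicalSpace B] [T1Space B]
    (hB : IsTopologicalBasis {s : Set B | IsClopen s}) {p : B} (hp : ¬ IsOpen ({p} : Set B))
    {U : ℕ → Set B} (hU : ∀ n, IsOpen (U n)) (hpU : ({p} : Set B) = ⋂ n, U n) :
    ∃ V : ℕ → Set B, V 0 = univ ∧ (∀ n, IsClopen (V n)) ∧ Antitone V ∧
      (∀ n, (V n \ V (n + 1)).Nonempty) ∧ ⋂ n, V n = {p} := by
  have hmem : ∀ n, p ∈ U n := fun n => mem_iInter.1 (hpU ▸ mem_singleton p) n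
  have step : ∀ (n : ℕ) (V : {V : Set B // IsClopen V ∧ p ∈ V}),
      ∃ W : {V : Set B // IsClopen V ∧ p ∈ V},
        W.1 ⊆ V.1 ∩ U n ∧ (V.1 \ W.1).Nonempty := by
    rintro n ⟨V, hV, hpV⟩
    have hO : IsOpen (V ∩ U n) := hV.isOpen.inter (hU n)
    obtain ⟨q, hq, hqp⟩ : ∃ q ∈ V ∩ U n, q ≠ p := by
      by_contra! h
      have : V ∩ U n = {p} := eq_singleton_iff_unique_mem.2 ⟨⟨hpV, hmem n⟩, h⟩
      exact hp (this ▸ hO)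
    obtain ⟨W, hW, hpW, hWs⟩ := hB.exists_subset_of_mem_open
      (show p ∈ (V ∩ U n) ∩ {q}ᶜ from ⟨⟨hpV, hmem n⟩, fun h => hqp h.symm⟩)
      (hO.inter isOpen_compl_singleton)
    exact ⟨⟨W, hW, hpW⟩, fun x hx => (hWs hx).1, q, hq.1, fun h => (hWs h).2 rfl⟩
  choose F hF hF' using step
  let V : ℕ → {V : Set B // IsClopen V ∧ p ∈ V} :=
    fun n => Nat.rec ⟨univ, isClopen_univ, mem_univ p⟩ F n
  refine ⟨fun n => (V n).1, rfl, fun n => (V n).2.1, antitone_nat_of_succ_le fun n => ?_,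
    fun n => hF' n (V n), Subset.antisymm ?_ ?_⟩
  · exact fun x hx => (hF n (V n) hx).1
  · rw [hpU]
    exact fun x hx => mem_iInter.2 fun n => (hF n (V n) (mem_iInter.1 hx (n + 1))).2
  · rintro x rfl
    exact mem_iInter.2 fun n => (V n).2.2

/-- No point of `B ∖ X` is a `G_δ` point of the Banaschewski
compactification `B` of the zero-dimensional space `X`. -/
theorem stmt_11 {B : Type*} [TopologicalSpace B] [CompactSpace B] [T2Space B]
    (hB : IsTopologicalBasis {s : Set B | IsClopen s})
    (X : Set B) (hd : Dense X)
    (hext : ∀ g : X → Bool, Continuous g → ∃ G : B → Bool, Continuous G ∧ ∀ x : X, G x = g x) :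
    ∀ p ∈ Xᶜ, ¬ ∃ U : ℕ → Set B, (∀ n, IsOpen (U n)) ∧ ({p} : Set B) = ⋂ n, U n := by
  classical
  rintro p hp ⟨U, hU, hpU⟩
  have hiso : ¬ IsOpen ({p} : Set B) := fun h => by
    obtain ⟨x, hx, hxX⟩ := hd.inter_open_nonempty _ h (singleton_nonempty p)
    exact hp (mem_singleton_iff.1 hx ▸ hxX)
  obtain ⟨V, hV0, hV, hanti, hne, hVp⟩ := exists_strict_clopen_seq hB hiso hU hpU
  have hshell : ∀ x : X, ∃ n, (x : B) ∈ V n \ V (n + 1) := by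
    intro x
    by_contra! h
    have hall : ∀ n, (x : B) ∈ V n := fun n => by
      induction n with
      | zero => simp [hV0]
      | succ n ih => by_contra h'; exact h n ⟨ih, h'⟩
    have : (x : B) = p := by
      rw [← mem_singleton_iff, ← hVp]
      exact mem_iInter.2 hall
    exact hp (this ▸ x.2)
  choose f hf using hshell
  have huniq : ∀ (x : X) (n : ℕ), (x : B) ∈ V n \ V (n + 1) → f x = n := by
    intro x n hx
    rcases lt_trichotomy (f x) n with h | h | h
    · exact absurd (hanti (Nat.succ_le_of_lt h) hx.1) (hf x).2
    · exact h
    · exact absurd (hanti (Nat.succ_le_of_lt h) (hf x).1) hx.2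
  have hopen : ∀ n, IsOpen (V n \ V (n + 1)) := fun n => ((hV n).diff (hV (n + 1))).isOpen
  have hcont : Continuous fun x : X => decide (Even (f x)) := by
    refine ((IsLocallyConstant.iff_exists_open _).2 fun x => ?_).continuous
    refine ⟨Subtype.val ⁻¹' (V (f x) \ V (f x + 1)), (hopen _).preimage continuous_subtype_val,
      hf x, fun y hy => ?_⟩
    rw [huniq y _ hy]
  obtain ⟨G, hG, hGf⟩ := hext _ hcont
  -- `G` is constant, equal to `G p`, on some `V n`.
  obtain ⟨n, hn⟩ : ∃ n, V n ⊆ G ⁻¹' {G p} := by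
    refine exists_subset_nhds_of_compactSpace hanti.directed_ge (fun n => (hV n).isClosed) ?_
    rw [hVp]
    rintro x rfl
    exact ((isOpen_discrete _).preimage hG).mem_nhds rfl
  have key : ∀ m, n ≤ m → decide (Even m) = G p := by
    intro m hm
    obtain ⟨x, hx, hxX⟩ := hd.inter_open_nonempty _ (hopen m) (hne m)
    have h1 : G x = G p := hn (hanti hm hx.1)
    rw [← h1, ← huniq ⟨x, hxX⟩ m hx]
    exact (hGf ⟨x, hxX⟩).symm
  have := (key n le_rfl).trans (key (n + 1) n.le_succ).symm
  rw [decide_eq_decide, Nat.even_add_one] at this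
  tauto
end

section
/- Let X be a zero-dimensional space which is not pseudocompact, with Banaschewski compactification bX, and let υX ⊆ bX be the copy of the N-compactification υ₀X of X inside bX. Then the remainder bX ∖ υX has cardinality at least 2^(2^ℵ₀). -/
/-!
A non-pseudocompact zero-dimensional space `X` admits a continuous surjection `h : X → ℕ`
(`exists_continuous_nat`): an unbounded function yields a discrete sequence of nonempty open sets,
which are shrunk to clopen sets `C n`, and `h` takes the value `n` on `C n` and `0` elsewhere.

Choose `x n ∈ X` with `h (x n) = n`. For every `A ⊆ ℕ` the indicator of `h ⁻¹' A` extends to a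
continuous `G A : B → Bool`. If `U` is a free ultrafilter on `ℕ` and `p` is the limit of `x`
along `U`, then `G A p` tells whether `A ∈ U`. Hence distinct ultrafilters give distinct points,
and the clopen sets `{G {k | n ≤ k} = true}`, `n : ℕ`, contain `p` while their intersection misses
`X`, so `p ∉ υX`.

That there are `2 ^ (2 ^ ℵ₀)` free ultrafilters comes from an independent family of subsets of `ℕ`
indexed by `Set ℕ` (Hausdorff), phrased as a sequence in `Set ℕ → Bool` having every point as a
cluster point (`exists_seq_all_cluster`).
-/

open Set TopologicalSpace

/-- Finitely many subsets of `ℕ` are already distinguished by their traces on a finite set. -/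
lemma exists_separating_finset (T : Set (Set ℕ)) (hT : T.Finite) :
    ∃ F : Finset ℕ, ∀ S ∈ T, ∀ S' ∈ T, (∀ k ∈ F, k ∈ S ↔ k ∈ S') → S = S' := by
  classical
  have hex : ∀ S S' : Set ℕ, ∃ k : ℕ, (k ∈ S ↔ k ∈ S') → S = S' := by
    intro S S'
    by_contra! hcon
    exact (hcon 0).2 (Set.ext fun k => (hcon k).1)
  choose d hd using hex
  refine ⟨(hT.toFinset ×ˢ hT.toFinset).image (fun q => d q.1 q.2), ?_⟩
  intro S hS S' hS' hk
  apply hd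
  apply hk
  refine Finset.mem_image.2 ⟨(S, S'), ?_, rfl⟩
  simp [hS, hS']

/-- The sets `{n | D n S = true}`, `S : Set ℕ`, form an independent family on `ℕ`. A natural number
codes a pair `(F, 𝓕)` with `F` a finite set and `𝓕` a finite collection of finite sets, each pair
having infinitely many codes, and `D n S` records whether `S ∩ F ∈ 𝓕`. -/
lemma exists_seq_all_cluster :
    ∃ D : ℕ → (Set ℕ → Bool), ∀ φ : Set ℕ → Bool, MapClusterPt φ Filter.atTop D := by
  classical
  obtain ⟨e, he⟩ := exists_surjective_nat (Finset ℕ × Finset (Finset ℕ))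
  refine ⟨fun n S => decide ((e n.unpair.1).1.filter (· ∈ S) ∈ (e n.unpair.1).2), fun φ => ?_⟩
  rw [mapClusterPt_iff_frequently]
  intro s hs
  rw [nhds_pi, Filter.mem_pi] at hs
  obtain ⟨T, hT, t, ht, hts⟩ := hs
  obtain ⟨F, hF⟩ := exists_separating_finset T hT
  obtain ⟨j, hj⟩ := he (F, (hT.toFinset.filter (fun S => φ S = true)).image
    (fun S => F.filter (· ∈ S)))
  rw [Filter.frequently_atTop]
  intro m
  refine ⟨Nat.pair j m, Nat.right_le_pair j m, hts ?_⟩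
  intro S hS
  suffices hval : decide ((e (Nat.pair j m).unpair.1).1.filter (· ∈ S) ∈
      (e (Nat.pair j m).unpair.1).2) = φ S by
    simp only [hval]
    exact mem_of_mem_nhds (ht S)
  rw [Nat.unpair_pair, hj]
  simp only
  rw [Bool.eq_iff_iff, decide_eq_true_iff, Finset.mem_image]
  constructor
  · rintro ⟨S', hS', heq⟩
    rw [Finset.mem_filter, Set.Finite.mem_toFinset] at hS'
    have : S' = S := by
      refine hF S' hS'.1 S hS fun k hk => ?_
      have := Finset.ext_iff.1 heq k
      simpa [hk] using this
    exact this ▸ hS'.2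
  · intro hφ
    exact ⟨S, by simp [hS, hφ], rfl⟩

/-- The values of `|f|` along a suitable sequence `a` are 1-separated. Clopen neighbourhoods `C n` of
`a n` on which `|f|` stays within 1/3 of `|f (a n)|` form a discrete family, so the map equal to `n`
on `C n` and to `0` off their union is locally constant. -/
lemma exists_continuous_nat {Y : Type*} [TopologicalSpace Y]
    (hY : IsTopologicalBasis {s : Set Y | IsClopen s}) (f : Y → ℝ) (hf : Continuous f)
    (hub : ∀ M : ℝ, ∃ y, M < |f y|) :
    ∃ h : Y → ℕ, Continuous h ∧ Function.Surjective h := by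
  classical
  set g : Y → ℝ := fun y => |f y| with hg
  have hgc : Continuous g := hf.abs
  obtain ⟨y₀, -⟩ := hub 0
  choose next hnext using fun y => hub (g y + 1)
  let a : ℕ → Y := fun n => next^[n] y₀
  have ha : ∀ n, g (a n) + 1 < g (a (n + 1)) := by
    intro n
    simp only [a, Function.iterate_succ_apply']
    exact hnext _
  have hmono : Monotone fun n : ℕ => g (a n) - n := by
    refine monotone_nat_of_le_succ fun n => ?_
    have := ha n
    push_cast
    linarith
  have hgap : ∀ m n : ℕ, m < n → g (a m) + 1 ≤ g (a n) := by
    intro m n hmn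
    have h1 := hmono hmn.le
    have h2 : (m : ℝ) + 1 ≤ n := by exact_mod_cast hmn
    simp only at h1
    linarith
  -- The values `g (a n)` are 1-separated, so three steps shorter than 1/3 cannot lead from one of
  -- them to another.
  have huniq : ∀ (m n : ℕ) (y z : Y), |g y - g (a m)| < 1 / 3 → |g z - g (a n)| < 1 / 3 →
      |g y - g z| < 1 / 3 → m = n := by
    intro m n y z h1 h2 h3
    rw [abs_lt] at h1 h2 h3
    rcases lt_trichotomy m n with h | h | h
    · have := hgap _ _ h
      linarith
    · exact h
    · have := hgap _ _ h
      linarith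
  have hC : ∀ n, ∃ C : Set Y, IsClopen C ∧ a n ∈ C ∧ ∀ y ∈ C, |g y - g (a n)| < 1 / 3 := by
    intro n
    have hopen : IsOpen {y | |g y - g (a n)| < 1 / 3} :=
      isOpen_lt (by fun_prop) continuous_const
    obtain ⟨C, hC, haC, hsub⟩ := hY.exists_subset_of_mem_open
      (show a n ∈ {y | |g y - g (a n)| < 1 / 3} by simp) hopen
    exact ⟨C, hC, haC, fun y hy => hsub hy⟩
  choose C hCc haC hCs using hC
  let h : Y → ℕ := fun y => if hy : ∃ n, y ∈ C n then hy.choose else 0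
  have hval : ∀ n, ∀ y ∈ C n, h y = n := by
    intro n y hy
    have hex : ∃ n, y ∈ C n := ⟨n, hy⟩
    simp only [h, dif_pos hex]
    exact huniq _ _ y y (hCs _ _ hex.choose_spec) (hCs _ _ hy) (by simp)
  have hzero : ∀ y, (∀ n, y ∉ C n) → h y = 0 := by
    intro y hy
    simp only [h]
    rw [dif_neg]
    push Not
    exact hy
  refine ⟨h, ?_, fun n => ⟨a n, hval n _ (haC n)⟩⟩
  refine IsLocallyConstant.continuous ((IsLocallyConstant.iff_eventually_eq h).2 fun y => ?_)
  have hW : ∀ᶠ z in nhds y, |g z - g y| < 1 / 6 :=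
    (isOpen_lt (by fun_prop) continuous_const).mem_nhds (by simp)
  have hclose : ∀ z w, |g z - g y| < 1 / 6 → |g w - g y| < 1 / 6 → |g z - g w| < 1 / 3 := by
    intro z w h1 h2
    rw [abs_lt] at *
    constructor <;> linarith
  by_cases hex : ∃ n, ∃ w ∈ C n, |g w - g y| < 1 / 6
  · obtain ⟨n, w, hw, hwy⟩ := hex
    have honly : ∀ z, |g z - g y| < 1 / 6 → z ∉ C n → h z = 0 := by
      intro z hz hzn
      refine hzero z fun m hm => hzn ?_
      have : m = n := huniq m n z w (hCs _ _ hm) (hCs _ _ hw) (hclose z w hz hwy)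
      exact this ▸ hm
    by_cases hy : y ∈ C n
    · filter_upwards [(hCc n).isOpen.mem_nhds hy] with z hz
      rw [hval n z hz, hval n y hy]
    · filter_upwards [hW, (hCc n).compl.isOpen.mem_nhds hy] with z hz hzn
      rw [honly z hz hzn, honly y (by simp) hy]
  · push Not at hex
    have hnone : ∀ z, |g z - g y| < 1 / 6 → h z = 0 := fun z hz =>
      hzero z fun n hn => absurd hz (not_lt.2 (hex n z hn))
    filter_upwards [hW] with z hz
    rw [hnone z hz, hnone y (by simp)]

/-- If the zero-dimensional space `X` is not pseudocompact, then the
remainder `B ∖ υX` of its Banaschewski compactification has at least `2 ^ (2 ^ ℵ₀)` points. -/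
theorem stmt_12 {B : Type*} [TopologicalSpace B] [CompactSpace B] [T2Space B]
    (hB : IsTopologicalBasis {s : Set B | IsClopen s})
    (X : Set B) (hd : Dense X)
    (hext : ∀ g : X → Bool, Continuous g → ∃ G : B → Bool, Continuous G ∧ ∀ x : X, G x = g x)
    (hnp : ¬ ∀ f : X → ℝ, Continuous f → ∃ M : ℝ, ∀ x, |f x| ≤ M) :
    (2 : Cardinal) ^ ((2 : Cardinal) ^ Cardinal.aleph0) ≤ Cardinal.mk ((upsilon X)ᶜ : Set B) := by
  classical
  have hX : IsTopologicalBasis {s : Set X | IsClopen s} := by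
    refine isTopologicalBasis_of_isOpen_of_nhds (fun s hs => IsClopen.isOpen hs) ?_
    rintro x u hxu hu
    obtain ⟨v, hv, rfl⟩ := isOpen_induced_iff.1 hu
    obtain ⟨C, hC, hxC, hsub⟩ := hB.exists_subset_of_mem_open hxu hv
    exact ⟨Subtype.val ⁻¹' C, IsClopen.preimage hC continuous_subtype_val, hxC,
      Set.preimage_mono hsub⟩
  push Not at hnp
  obtain ⟨f, hf, hub⟩ := hnp
  obtain ⟨h, hh, hsurj⟩ := exists_continuous_nat hX f hf hub
  choose x hx using hsurj
  obtain ⟨D, hD⟩ := exists_seq_all_cluster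
  choose U hUtop hUD using fun φ => mapClusterPt_iff_ultrafilter.1 (hD φ)
  choose G hGc hG using fun A : Set ℕ => hext (fun y => decide (h y ∈ A))
    ((continuous_of_discreteTopology (f := fun n : ℕ => decide (n ∈ A))).comp hh)
  let p : (Set ℕ → Bool) → B := fun φ => ((U φ).map fun n => (x n : B)).lim
  have hp : ∀ φ, Filter.Tendsto (fun n => (x n : B)) (U φ) (nhds (p φ)) := fun φ =>
    ((U φ).map fun n => (x n : B)).le_nhds_lim
  have hGp : ∀ φ A, ∀ᶠ n in (U φ : Filter ℕ), decide (n ∈ A) = G A (p φ) := by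
    intro φ A
    have h1 := ((hGc A).tendsto (p φ)).comp (hp φ)
    rw [nhds_discrete, Filter.tendsto_pure] at h1
    filter_upwards [h1] with n hn
    rw [← hn, Function.comp_apply, hG, hx]
  have hmem : ∀ φ, p φ ∈ (upsilon X)ᶜ := by
    intro φ hφ
    obtain ⟨y, hy, hyX⟩ := hφ (fun n => {b | G {k | n ≤ k} b = true}) fun n => by
      refine ⟨(isClopen_discrete {true}).preimage (hGc _), ?_⟩
      obtain ⟨k, hk, hnk⟩ :=
        ((hGp φ {k | n ≤ k}).and (hUtop φ (Filter.eventually_ge_atTop n))).exists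
      exact hk.symm.trans (by simpa using hnk)
    have h1 := Set.mem_iInter.1 hy (h ⟨y, hyX⟩ + 1)
    have h2 := hG {k | h ⟨y, hyX⟩ + 1 ≤ k} ⟨y, hyX⟩
    simp only [Set.mem_ofPred_eq] at h1 h2
    rw [h1] at h2
    simp at h2
  have hinj : Function.Injective fun φ => (⟨p φ, hmem φ⟩ : ((upsilon X)ᶜ : Set B)) := by
    have hcoord : ∀ φ S, G {n | D n S = true} (p φ) = φ S := by
      intro φ S
      have h1 := ((continuous_apply S).tendsto φ).comp (hUD φ)
      rw [nhds_discrete, Filter.tendsto_pure] at h1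
      obtain ⟨n, hn1, hn2⟩ := (h1.and (hGp φ {n | D n S = true})).exists
      rw [← hn2, ← hn1]
      simp
    intro φ ψ heq
    have heq' : p φ = p ψ := congrArg Subtype.val heq
    funext S
    rw [← hcoord φ S, ← hcoord ψ S, heq']
  have hle := Cardinal.lift_mk_le_lift_mk_of_injective hinj
  rw [Cardinal.lift_uzero] at hle
  refine le_trans (le_of_eq ?_) hle
  simp
end

section
/- Let X be a zero-dimensional space which is not pseudocompact, with Banaschewski compactification bX, and let υX ⊆ bX be the copy of the N-compactification υ₀X of X inside bX. Consider the subspace R = bX ∖ υX. Then: (a) for no point p ∈ R is the singleton {p} the zero-set of a continuous real-valued function on R; (b) R has no isolated points; (c) no point of R has a countable neighborhood basis in R. -/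
/-!
If some point `p` of the remainder `R = B ∖ υX` were a `Gδ` point of `R`, it would be a `Gδ` point
of `B`: the clopen sets witnessing `p ∉ υX` have an intersection contained in `R`, so intersecting
them with clopen sets of `B` that cut out `p` in `R` gives clopen sets of `B` with intersection
`{p}`. This is impossible (`false_of_iInter_clopen_subset_singleton`): such a sequence can be
refined to clopen sets `D 0 ⊇ D 1 ⊇ …` shrinking to `p`, all of whose differences `D n ∖ D (n + 1)`
meet `X`, and the function on `X` recording the parity of the difference containing a point is
continuous but does not extend continuously to `p`.

Each of the three properties to be excluded makes `p` a `Gδ` point of `R`.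
-/

open Set TopologicalSpace

/-- A point outside `X` is not the intersection of countably many clopen sets of `B`. -/
lemma false_of_iInter_clopen_subset_singleton {B : Type*} [TopologicalSpace B] [CompactSpace B]
    (X : Set B) (hd : Dense X)
    (hext : ∀ g : X → Bool, Continuous g → ∃ G : B → Bool, Continuous G ∧ ∀ x : X, G x = g x)
    (p : B) (hp : p ∉ X) (U : ℕ → Set B) (hU : ∀ n, IsClopen (U n) ∧ p ∈ U n)
    (hUp : ⋂ n, U n ⊆ {p}) : False := by
  classical
  have hmiss : ∀ x ∈ X, ∃ m, x ∉ U m := by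
    intro x hx
    by_contra! h
    have hxp : x = p := hUp (mem_iInter.2 h)
    exact hp (hxp ▸ hx)
  have step : ∀ (n : ℕ) (D : {D : Set B // IsClopen D ∧ p ∈ D}),
      ∃ D' : {D : Set B // IsClopen D ∧ p ∈ D},
        D'.1 ⊆ D.1 ∧ D'.1 ⊆ U n ∧ ∃ x ∈ X, x ∈ D.1 ∧ x ∉ D'.1 := by
    rintro n ⟨D, hD, hpD⟩
    obtain ⟨x, hxD, hxX⟩ := hd.inter_open_nonempty D hD.isOpen ⟨p, hpD⟩
    obtain ⟨m, hm⟩ := hmiss x hxX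
    exact ⟨⟨D ∩ (U n ∩ U m), hD.inter ((hU n).1.inter (hU m).1), hpD, (hU n).2, (hU m).2⟩,
      fun y hy => hy.1, fun y hy => hy.2.1, x, hxX, hxD, fun h => hm h.2.2⟩
  choose next hsub hsubU hpt using step
  let D : ℕ → {D : Set B // IsClopen D ∧ p ∈ D} :=
    fun n => Nat.rec ⟨univ, isClopen_univ, mem_univ p⟩ next n
  have hanti : Antitone fun n => (D n).1 := antitone_nat_of_succ_le fun n => hsub n (D n)
  have hDU : ∀ n, (D (n + 1)).1 ⊆ U n := fun n => hsubU n (D n)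
  have hDpt : ∀ n, ∃ x ∈ X, x ∈ (D n).1 ∧ x ∉ (D (n + 1)).1 := fun n => hpt n (D n)
  have hex : ∀ x : X, ∃ n, x.1 ∉ (D n).1 := fun x => by
    obtain ⟨m, hm⟩ := hmiss x.1 x.2
    exact ⟨m + 1, fun h => hm (hDU m h)⟩
  let k : X → ℕ := fun x => Nat.find (hex x)
  have hk_eq : ∀ (x : X) (n : ℕ), x.1 ∈ (D n).1 → x.1 ∉ (D (n + 1)).1 → k x = n + 1 := by
    intro x n h1 h2
    refine (Nat.find_eq_iff (hex x)).2 ⟨h2, fun m hm => not_not.2 ?_⟩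
    exact hanti (Nat.lt_succ_iff.1 hm) h1
  have hk_inv : ∀ x : X, ∃ n, x.1 ∈ (D n).1 ∧ x.1 ∉ (D (n + 1)).1 := by
    intro x
    have hspec : x.1 ∉ (D (k x)).1 := Nat.find_spec (hex x)
    rcases hkx : k x with _ | n
    · rw [hkx] at hspec
      exact absurd (mem_univ x.1) hspec
    · refine ⟨n, ?_, hkx ▸ hspec⟩
      have hlt : n < Nat.find (hex x) := by
        change n < k x
        omega
      exact not_not.1 (Nat.find_min (hex x) hlt)
  have hk : IsLocallyConstant k := by
    refine (IsLocallyConstant.iff_exists_open k).2 fun x => ?_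
    obtain ⟨n, h1, h2⟩ := hk_inv x
    refine ⟨Subtype.val ⁻¹' ((D n).1 \ (D (n + 1)).1),
      ((D n).2.1.diff (D (n + 1)).2.1).isOpen.preimage continuous_subtype_val, ⟨h1, h2⟩, ?_⟩
    intro y hy
    rw [hk_eq x n h1 h2, hk_eq y n hy.1 hy.2]
  obtain ⟨G, hG, hGg⟩ := hext (fun x => decide (Even (k x)))
    (hk.comp fun n => decide (Even n)).continuous
  have hopen : IsOpen (G ⁻¹' {G p}) := (isOpen_discrete _).preimage hG
  -- By compactness the `D n` form a neighbourhood basis of `p`.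
  obtain ⟨n, hn⟩ : ∃ n, (D n).1 ⊆ G ⁻¹' {G p} := by
    refine exists_subset_nhds_of_compactSpace (hanti.directed_ge)
      (fun n => (D n).2.1.isClosed) fun x hx => ?_
    have hxp : x = p := hUp (mem_iInter.2 fun m => hDU m (mem_iInter.1 hx (m + 1)))
    subst hxp
    exact hopen.mem_nhds rfl
  obtain ⟨x, hxX, hx1, hx2⟩ := hDpt n
  obtain ⟨y, hyX, hy1, hy2⟩ := hDpt (n + 1)
  have hx : G x = G p := hn hx1
  have hy : G y = G p := hn (hanti (Nat.le_succ n) hy1)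
  have hxy := hx.trans hy.symm
  rw [hGg ⟨x, hxX⟩, hGg ⟨y, hyX⟩, hk_eq ⟨x, hxX⟩ n hx1 hx2,
    hk_eq ⟨y, hyX⟩ (n + 1) hy1 hy2, decide_eq_decide] at hxy
  have := Nat.even_add_one (n := n + 1)
  tauto

/-- No point of `B ∖ υX` is the intersection of countably many of its neighbourhoods. -/
lemma false_of_iInter_nhds_subset_singleton {B : Type*} [TopologicalSpace B] [CompactSpace B]
    (hB : IsTopologicalBasis {s : Set B | IsClopen s})
    (X : Set B) (hd : Dense X)
    (hext : ∀ g : X → Bool, Continuous g → ∃ G : B → Bool, Continuous G ∧ ∀ x : X, G x = g x)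
    (p : ((upsilon X)ᶜ : Set B)) (V : ℕ → Set ((upsilon X)ᶜ : Set B))
    (hV : ∀ n, V n ∈ nhds p) (hVp : ⋂ n, V n ⊆ {p}) : False := by
  have hW : ∀ n, ∃ W : Set B, (IsClopen W ∧ p.1 ∈ W) ∧ Subtype.val ⁻¹' W ⊆ V n := by
    intro n
    obtain ⟨T, hT, hTV⟩ := mem_nhds_subtype _ _ _ |>.1 (hV n)
    obtain ⟨W, hWc, hpW, hWT⟩ := hB.mem_nhds_iff.1 hT
    exact ⟨W, ⟨hWc, hpW⟩, (preimage_mono hWT).trans hTV⟩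
  choose W hWc hWV using hW
  have hpX : p.1 ∉ X := fun h => p.2 fun Z hZ => ⟨p.1, mem_iInter.2 fun n => (hZ n).2, h⟩
  obtain ⟨Z, hZ, hZX⟩ : ∃ Z : ℕ → Set B, (∀ n, IsClopen (Z n) ∧ p.1 ∈ Z n) ∧
      ¬ ((⋂ n, Z n) ∩ X).Nonempty := by
    have h := p.2
    simp only [upsilon, mem_compl_iff, mem_ofPred_eq, not_forall] at h
    obtain ⟨Z, hZ, hne⟩ := h
    exact ⟨Z, hZ, hne⟩
  refine false_of_iInter_clopen_subset_singleton X hd hext p.1 hpX (fun n => W n ∩ Z n)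
    (fun n => ⟨(hWc n).1.inter (hZ n).1, (hWc n).2, (hZ n).2⟩) fun q hq => ?_
  rw [mem_iInter] at hq
  -- `q` lies in the remainder, because the sets `Z n` witness this for `q` as well.
  have hqR : q ∈ (upsilon X)ᶜ := fun h => hZX (h Z fun n => ⟨(hZ n).1, (hq n).2⟩)
  have hqp : (⟨q, hqR⟩ : ((upsilon X)ᶜ : Set B)) = p :=
    hVp (mem_iInter.2 fun n => hWV n (hq n).1)
  exact congrArg Subtype.val hqp

/-- For a zero-dimensional non-pseudocompact `X`, in the remainder
`R = B ∖ υX` (with subspace topology):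
(a) no singleton `{p}` is a zero-set of a continuous real function on `R`;
(b) `R` has no isolated points;
(c) no point of `R` has a countable neighborhood basis. -/
theorem stmt_13 {B : Type*} [TopologicalSpace B] [CompactSpace B] [T2Space B]
    (hB : IsTopologicalBasis {s : Set B | IsClopen s})
    (X : Set B) (hd : Dense X)
    (hext : ∀ g : X → Bool, Continuous g → ∃ G : B → Bool, Continuous G ∧ ∀ x : X, G x = g x)
    (hnp : ¬ ∀ f : X → ℝ, Continuous f → ∃ M : ℝ, ∀ x, |f x| ≤ M) :
    (∀ p : ((upsilon X)ᶜ : Set B),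
        ¬ ∃ h : ((upsilon X)ᶜ : Set B) → ℝ, Continuous h ∧ h ⁻¹' {0} = {p}) ∧
    (∀ p : ((upsilon X)ᶜ : Set B), ¬ IsOpen ({p} : Set ((upsilon X)ᶜ : Set B))) ∧
    (∀ p : ((upsilon X)ᶜ : Set B),
        ¬ ∃ V : ℕ → Set ((upsilon X)ᶜ : Set B),
          (∀ n, V n ∈ nhds p) ∧ ∀ s ∈ nhds p, ∃ n, V n ⊆ s) := by
  have key := false_of_iInter_nhds_subset_singleton hB X hd hext
  refine ⟨?_, ?_, ?_⟩
  · rintro p ⟨h, hc, hz⟩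
    have hp : h p = 0 := by
      have : p ∈ h ⁻¹' {0} := hz ▸ mem_singleton p
      exact this
    refine key p (fun n => {q | |h q| < 1 / ((n : ℝ) + 1)}) (fun n => ?_) fun q hq => ?_
    · refine (isOpen_lt hc.abs continuous_const).mem_nhds ?_
      rw [mem_ofPred_eq, hp, abs_zero]
      positivity
    · rw [← hz]
      by_contra hne
      obtain ⟨n, hn⟩ := exists_nat_one_div_lt (abs_pos.2 hne)
      exact lt_asymm hn (mem_iInter.1 hq n)
  · intro p hp
    exact key p (fun _ => {p}) (fun _ => hp.mem_nhds rfl) (iInter_subset _ 0)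
  · rintro p ⟨V, hV, hbasis⟩
    refine key p V hV fun q hq => ?_
    by_contra hne
    obtain ⟨n, hn⟩ := hbasis {q}ᶜ (isOpen_compl_singleton.mem_nhds (Ne.symm hne))
    exact hn (mem_iInter.1 hq n) rfl
end

section
/- Let X be a zero-dimensional space with Banaschewski compactification bX. If bX is scattered, then X is pseudocompact. -/
open Set TopologicalSpace

/-!
Suppose `f : X → ℝ` is continuous and unbounded. Scatteredness makes the isolated points of `B`
dense, and they all lie in `X` because `X` is dense. Hence there are isolated points `d 0, d 1, …`
of `X` with `|f (d n)| → ∞` strictly increasing. Each `{d n}` is clopen in `X` and the family is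
locally finite, so *every* subset of `{d n}` is clopen in `X` and its indicator extends to `B`.

Prescribing on `d n` the coordinates of the `n`-th term of a dense sequence of the Cantor space
`ℕ → Bool` gives a continuous map from `B` onto `ℕ → Bool`. A compact scattered space admits no
continuous map onto a space without isolated points: on a closed set `E` minimal among those
mapping onto the target, an isolated point of `E` would have an isolated image
(`not_surjective_cantor_of_scattered`).
-/

lemma not_isOpen_singleton_cantor (p : ℕ → Bool) : ¬ IsOpen ({p} : Set (ℕ → Bool)) := by
  intro h
  have ht : Filter.Tendsto (fun n => Function.update p n (!(p n))) Filter.atTop (nhds p) := by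
    rw [tendsto_pi_nhds]
    intro i
    refine tendsto_const_nhds.congr' ?_
    filter_upwards [Filter.eventually_gt_atTop i] with n hn
    rw [Function.update_of_ne hn.ne]
  obtain ⟨n, hn⟩ := (ht.eventually (h.mem_nhds rfl)).exists
  have := congrFun (show Function.update p n (!(p n)) = p from hn) n
  simp at this

lemma not_surjective_cantor_of_scattered {B : Type*} [TopologicalSpace B] [CompactSpace B]
    (hsc : ∀ A : Set B, A.Nonempty → ∃ a ∈ A, ∃ U : Set B, IsOpen U ∧ U ∩ A = {a})
    (h : B → ℕ → Bool) (hc : Continuous h) : ¬ Function.Surjective h := by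
  intro hs
  -- The Cantor space is lifted to the universe of `B`, where the existence lemma is stated.
  obtain ⟨E, hE, himg', hmin'⟩ := exists_compact_surjective_zorn_subset
    (A := ULift (ℕ → Bool)) (continuous_uliftUp.comp hc) (ULift.up_surjective.comp hs)
  have himg : h '' E = univ := by
    refine eq_univ_of_forall fun q => ?_
    obtain ⟨x, hx, hxq⟩ := himg'.ge (mem_univ (ULift.up q))
    exact ⟨x, hx, ULift.up_injective hxq⟩
  have hmin : ∀ E₀ : Set E, E₀ ≠ univ → IsClosed E₀ → E.domRestrict h '' E₀ ≠ univ := by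
    intro E₀ h₁ h₂ h₃
    refine hmin' E₀ h₁ h₂ (eq_univ_of_forall fun q => ?_)
    obtain ⟨x, hx, hxq⟩ := h₃.ge (mem_univ q.down)
    exact ⟨x, hx, ULift.down_injective hxq⟩
  have hne : E.Nonempty := by
    rw [← image_nonempty (f := h), himg]
    exact univ_nonempty
  obtain ⟨a, haE, U, hU, hUE⟩ := hsc E hne
  have haU : a ∈ U := (hUE.ge rfl).1
  have hcl : IsClosed ((Subtype.val ⁻¹' U)ᶜ : Set E) :=
    (hU.preimage continuous_subtype_val).isClosed_compl
  have hW := hmin (Subtype.val ⁻¹' U)ᶜ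
    (fun heq => (heq.ge (mem_univ (⟨a, haE⟩ : E))) haU) hcl
  have hcE : Continuous (E.domRestrict h) := hc.comp continuous_subtype_val
  have hopen := (hcl.isCompact.image hcE).isClosed.isOpen_compl
  -- Only the isolated point `a` was removed from `E`, so only the value `h a` can be missed.
  have hsub : (E.domRestrict h '' (Subtype.val ⁻¹' U)ᶜ)ᶜ ⊆ {h a} := by
    intro q hq
    obtain ⟨e, heE, rfl⟩ := himg.ge (mem_univ q)
    by_cases heU : e ∈ U
    · have : e = a := hUE.le ⟨heU, heE⟩
      simp [this]
    · exact absurd ⟨⟨e, heE⟩, heU, rfl⟩ hq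
  have hWne : (E.domRestrict h '' (Subtype.val ⁻¹' U)ᶜ)ᶜ.Nonempty := by
    rwa [nonempty_compl]
  rw [hWne.subset_singleton_iff.1 hsub] at hopen
  exact not_isOpen_singleton_cantor _ hopen

/-- If the Banaschewski compactification `B` of a zero-dimensional space `X`
is scattered (every nonempty subset has a relatively isolated point), then `X` is
pseudocompact. -/
theorem stmt_14 {B : Type*} [TopologicalSpace B] [CompactSpace B] [T2Space B]
    (hB : IsTopologicalBasis {s : Set B | IsClopen s})
    (X : Set B) (hd : Dense X)
    (hext : ∀ g : X → Bool, Continuous g → ∃ G : B → Bool, Continuous G ∧ ∀ x : X, G x = g x)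
    (hsc : ∀ A : Set B, A.Nonempty → ∃ a ∈ A, ∃ U : Set B, IsOpen U ∧ U ∩ A = {a}) :
    ∀ f : X → ℝ, Continuous f → ∃ M : ℝ, ∀ x, |f x| ≤ M := by
  intro f hf
  by_contra! hunb
  have hiso : ∀ n : ℕ, ∃ x : X, IsOpen ({x} : Set X) ∧ (n : ℝ) < |f x| := by
    intro n
    obtain ⟨x, hx⟩ := hunb n
    have ho : IsOpen {y : X | (n : ℝ) < |f y|} := isOpen_lt continuous_const hf.abs
    obtain ⟨V, hV, hVX⟩ := isOpen_induced_iff.1 ho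
    have hxV : x.1 ∈ V := hVX.ge hx
    obtain ⟨a, haV, U, hU, hUV⟩ := hsc V ⟨x, hxV⟩
    have hopen : IsOpen ({a} : Set B) := hUV ▸ hU.inter hV
    have haX : a ∈ X := by
      obtain ⟨b, hb, hbX⟩ := hd.inter_open_nonempty _ hopen (singleton_nonempty a)
      exact (show b = a from hb) ▸ hbX
    refine ⟨⟨a, haX⟩, ?_, hVX.le haV⟩
    convert hopen.preimage (continuous_subtype_val (p := (· ∈ X))) using 1
    ext y
    simp [Subtype.ext_iff]
  choose c hcopen hclt using hiso
  have htop : Filter.Tendsto (fun n => |f (c n)|) Filter.atTop Filter.atTop :=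
    Filter.tendsto_atTop_mono (fun n => (hclt n).le) tendsto_natCast_atTop_atTop
  obtain ⟨φ, hφ, hmono⟩ := Filter.strictMono_subseq_of_tendsto_atTop htop
  let d : ℕ → X := fun n => c (φ n)
  have hdinj : Function.Injective d := fun m n hmn =>
    hmono.injective (congrArg (fun x => |f x|) hmn)
  have hdlt : ∀ n : ℕ, (n : ℝ) < |f (d n)| := fun n =>
    lt_of_le_of_lt (Nat.cast_le.2 (hφ.id_le n)) (hclt (φ n))
  have hlf : LocallyFinite (fun n => ({d n} : Set X)) := by
    intro x
    refine ⟨{y | |f y| < |f x| + 1}, (isOpen_lt hf.abs continuous_const).mem_nhds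
      (show |f x| < |f x| + 1 from lt_add_one _), ?_⟩
    refine (finite_Iio (⌈|f x| + 1⌉₊)).subset ?_
    rintro n ⟨y, rfl, hy⟩
    exact Nat.lt_ceil.2 ((hdlt n).trans hy)
  have hclopen : ∀ T : Set ℕ, IsClopen (d '' T) := by
    intro T
    rw [← biUnion_of_singleton (d '' T), biUnion_image]
    refine ⟨?_, isOpen_biUnion fun n _ => hcopen (φ n)⟩
    rw [biUnion_eq_iUnion]
    exact (hlf.comp_injective Subtype.val_injective).isClosed_iUnion
      fun n => haveI : T1Space X := inferInstance; isClosed_singleton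
  classical
  let e : ℕ → ℕ → Bool := denseSeq (ℕ → Bool)
  have hG : ∀ i : ℕ, ∃ G : B → Bool, Continuous G ∧ ∀ n, G (d n) = e n i := by
    intro i
    obtain ⟨G, hGc, hGe⟩ := hext (fun x => decide (x ∈ d '' {n | e n i = true})) (by
      rw [continuous_bool_rng true]
      convert hclopen {n | e n i = true} using 1
      ext x
      simp)
    refine ⟨G, hGc, fun n => ?_⟩
    rw [hGe, hdinj.mem_set_image]
    simp
  choose G hGc hGe using hG
  have hcont : Continuous (fun b i => G i b) := continuous_pi hGc
  refine not_surjective_cantor_of_scattered hsc _ hcont ?_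
  rw [← range_eq_univ, ← (isCompact_range hcont).isClosed.closure_eq]
  refine ((denseRange_denseSeq (ℕ → Bool)).mono ?_).closure_eq
  rintro _ ⟨n, rfl⟩
  exact ⟨d n, funext fun i => hGe i n⟩
end

section
/- Let X be a zero-dimensional space with Banaschewski compactification bX. Then bX is an almost P-space if and only if X is pseudocompact and X is an almost P-space. -/
/-!
Write `X` for the dense subspace of the compact zero-dimensional space `B`.

If `X` is pseudocompact and almost `P`, take a point `p` of a `G_δ` set of `B` and a decreasing
sequence of clopen neighbourhoods `V n` of `p` inside the given open sets. The intersection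
`H = ⋂ V n` meets `X`: otherwise `x ↦ min {n | x ∉ V n}` is a locally constant unbounded function
on `X` (`exists_mem_iInter_of_pseudocompact`). Hence `H ∩ X` contains a nonempty set `W ∩ X`
with `W` open in `B`, and `W ⊆ closure (W ∩ X) ⊆ H` since `H` is closed.

Conversely, let `B` be almost `P`. Every nonempty open set of `B` meets `X`, so `X` is almost `P`.
If `X` carried an unbounded continuous function, it would have a decreasing sequence of nonempty
clopen sets `E n` with empty intersection (`exists_clopen_seq_of_unbounded`). Their clopen
extensions to `B` still decrease, so by compactness they have a common point, and the almost `P`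
property gives a nonempty open set, hence a point of `X`, in all of them.
-/

open Set TopologicalSpace

/-- A topological space is an almost `P`-space if every nonempty `G_δ` subset has
nonempty interior. -/
def AlmostPSpace (Y : Type*) [TopologicalSpace Y] : Prop :=
  ∀ G : Set Y, (∃ U : ℕ → Set Y, (∀ n, IsOpen (U n)) ∧ G = ⋂ n, U n) →
    G.Nonempty → (interior G).Nonempty

/-- An unbounded continuous function yields a decreasing sequence of nonempty clopen sets with
empty intersection: the tails of the unions of a locally finite sequence of clopen sets. -/
lemma exists_clopen_seq_of_unbounded {Y : Type*} [TopologicalSpace Y]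
    (hY : IsTopologicalBasis {s : Set Y | IsClopen s}) (f : Y → ℝ) (hf : Continuous f)
    (hunb : ∀ M : ℝ, ∃ x, M < |f x|) :
    ∃ E : ℕ → Set Y, (∀ n, IsClopen (E n)) ∧ (∀ n, (E n).Nonempty) ∧
      (∀ n, E (n + 1) ⊆ E n) ∧ ∀ x, ∃ n, x ∉ E n := by
  have key : ∀ k : ℕ, ∃ C : Set Y, IsClopen C ∧ C.Nonempty ∧ ∀ x ∈ C, (k : ℝ) < |f x| := by
    intro k
    obtain ⟨x, hx⟩ := hunb k
    have ho : IsOpen {y | (k : ℝ) < |f y|} := isOpen_lt continuous_const hf.abs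
    obtain ⟨C, hC, hxC, hCs⟩ := hY.exists_subset_of_mem_open
      (show x ∈ {y | (k : ℝ) < |f y|} from hx) ho
    exact ⟨C, hC, ⟨x, hxC⟩, fun y hy => hCs hy⟩
  choose C hC hne hbig using key
  have hlf : LocallyFinite C := by
    intro y
    obtain ⟨N, hN⟩ := exists_nat_gt |f y|
    refine ⟨{z | |f z| < N}, (isOpen_lt hf.abs continuous_const).mem_nhds hN,
      (Set.finite_lt_nat N).subset ?_⟩
    rintro k ⟨z, hz, hzN⟩
    have h1 := hbig k z hz
    exact_mod_cast h1.trans hzN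
  refine ⟨fun n => ⋃ k, C (n + k), fun n => ⟨?_, isOpen_iUnion fun k => (hC _).isOpen⟩, fun n => ?_,
    fun n => ?_, fun x => ?_⟩
  · exact (hlf.comp_injective (add_right_injective n)).isClosed_iUnion fun k => (hC _).isClosed
  · obtain ⟨x, hx⟩ := hne (n + 0)
    exact ⟨x, mem_iUnion.2 ⟨0, hx⟩⟩
  · refine iUnion_subset fun k => ?_
    rw [show n + 1 + k = n + (k + 1) by ring]
    exact subset_iUnion (fun k => C (n + k)) (k + 1)
  · obtain ⟨N, hN⟩ := exists_nat_gt |f x|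
    refine ⟨N, fun hx => ?_⟩
    obtain ⟨k, hk⟩ := mem_iUnion.1 hx
    have h1 := hbig _ x hk
    push_cast at h1
    have : (0 : ℝ) ≤ k := k.cast_nonneg
    linarith

/-- In a pseudocompact space, a decreasing sequence of nonempty clopen sets has a common point. -/
lemma exists_mem_iInter_of_pseudocompact {Y : Type*} [TopologicalSpace Y]
    (hps : ∀ f : Y → ℝ, Continuous f → ∃ M : ℝ, ∀ x, |f x| ≤ M)
    (E : ℕ → Set Y) (hE : ∀ n, IsClopen (E n)) (hne : ∀ n, (E n).Nonempty) (hanti : Antitone E) :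
    ∃ x, ∀ n, x ∈ E n := by
  classical
  by_contra! hcon
  have hloc : IsLocallyConstant fun x => Nat.find (hcon x) := by
    rw [IsLocallyConstant.iff_exists_open]
    intro x
    set N := Nat.find (hcon x) with hN
    -- `Nat.find` equals `N` on the open set of points in all `E m`, `m < N`, but outside `E N`.
    refine ⟨(⋂ m ∈ Finset.range N, E m) ∩ (E N)ᶜ,
      (isOpen_biInter_finset fun m _ => (hE m).isOpen).inter (hE N).isClosed.isOpen_compl,
      ⟨?_, Nat.find_spec (hcon x)⟩, ?_⟩
    · simp only [mem_iInter, Finset.mem_range]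
      intro m hm
      exact not_not.1 (Nat.find_min (hcon x) hm)
    · rintro y ⟨hy1, hy2⟩
      simp only [mem_iInter, Finset.mem_range] at hy1
      exact (Nat.find_eq_iff _).2 ⟨hy2, fun m hm => not_not.2 (hy1 m hm)⟩
  obtain ⟨M, hM⟩ := hps _ (hloc.comp (fun n : ℕ => (n : ℝ))).continuous
  obtain ⟨N, hN⟩ := exists_nat_gt M
  obtain ⟨x, hx⟩ := hne N
  have h1 : N ≤ Nat.find (hcon x) := by
    rw [Nat.le_find_iff]
    exact fun m hm => not_not.2 (hanti hm.le hx)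
  have h2 := (le_abs_self _).trans (hM x)
  have h3 : (N : ℝ) ≤ (Nat.find (hcon x) : ℕ) := by exact_mod_cast h1
  simp only [Function.comp] at h2
  linarith

/-- The Banaschewski compactification `B` of a zero-dimensional space `X`
is an almost `P`-space iff `X` is pseudocompact and an almost `P`-space. -/
theorem stmt_15 {B : Type*} [TopologicalSpace B] [CompactSpace B] [T2Space B]
    (hB : IsTopologicalBasis {s : Set B | IsClopen s})
    (X : Set B) (hd : Dense X)
    (hext : ∀ g : X → Bool, Continuous g → ∃ G : B → Bool, Continuous G ∧ ∀ x : X, G x = g x) :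
    AlmostPSpace B ↔
      ((∀ f : X → ℝ, Continuous f → ∃ M : ℝ, ∀ x, |f x| ≤ M) ∧ AlmostPSpace X) := by
  constructor
  · intro hP
    refine ⟨fun f hf => ?_, ?_⟩
    · by_contra! hunb
      have hX : IsTopologicalBasis {s : Set X | IsClopen s} := by
        refine isTopologicalBasis_of_isOpen_of_nhds (fun s hs => hs.isOpen) ?_
        rintro x U hxU hU
        obtain ⟨V, hV, rfl⟩ := isOpen_induced_iff.1 hU
        obtain ⟨C, hC, hxC, hCV⟩ := hB.exists_subset_of_mem_open hxU hV
        exact ⟨Subtype.val ⁻¹' C, IsClopen.preimage hC continuous_subtype_val, hxC,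
          preimage_mono hCV⟩
      obtain ⟨E, hE, hne, hsub, hemp⟩ := exists_clopen_seq_of_unbounded hX f hf hunb
      choose G hG hGE using fun n =>
        hext (E n).boolIndicator ((continuous_boolIndicator_iff_isClopen _).2 (hE n))
      let F : ℕ → Set B := fun n => G n ⁻¹' {true}
      have hF : ∀ n, IsClopen (F n) := fun n => (isClopen_discrete _).preimage (hG n)
      have hFE : ∀ n (x : X), (x : B) ∈ F n ↔ x ∈ E n := fun n x => by
        rw [mem_iff_boolIndicator (E n), ← hGE]; rfl
      -- `F (n + 1) \ F n` is open and misses `X`, hence is empty by density.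
      have hFsub : ∀ n, F (n + 1) ⊆ F n := by
        intro n b hb
        by_contra hb'
        obtain ⟨x, ⟨hx1, hx2⟩, hxX⟩ := hd.inter_open_nonempty (F (n + 1) ∩ (F n)ᶜ)
          ((hF _).isOpen.inter (hF n).isClosed.isOpen_compl) ⟨b, hb, hb'⟩
        exact hx2 ((hFE n ⟨x, hxX⟩).2 (hsub n ((hFE (n + 1) ⟨x, hxX⟩).1 hx1)))
      have hFne : (⋂ n, F n).Nonempty :=
        IsCompact.nonempty_iInter_of_sequence_nonempty_isCompact_isClosed F hFsub
          (fun n => (hne n).elim fun x hx => ⟨x, (hFE n x).2 hx⟩) (hF 0).isClosed.isCompact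
          fun n => (hF n).isClosed
      obtain ⟨x, hx, hxX⟩ := hd.inter_open_nonempty _ isOpen_interior
        (hP _ ⟨F, fun n => (hF n).isOpen, rfl⟩ hFne)
      obtain ⟨n, hn⟩ := hemp ⟨x, hxX⟩
      exact hn ((hFE n ⟨x, hxX⟩).1 (mem_iInter.1 (interior_subset hx) n))
    · rintro _ ⟨U, hU, rfl⟩ ⟨x, hx⟩
      choose V hV hVU using fun n => isOpen_induced_iff.1 (hU n)
      have hmem : ∀ n (y : X), (y : B) ∈ V n ↔ y ∈ U n := fun n y => by rw [← hVU]; rfl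
      obtain ⟨y, hy, hyX⟩ := hd.inter_open_nonempty _ isOpen_interior
        (hP _ ⟨V, hV, rfl⟩ ⟨x, mem_iInter.2 fun n => (hmem n x).2 (mem_iInter.1 hx n)⟩)
      refine ⟨⟨y, hyX⟩, mem_interior.2 ⟨Subtype.val ⁻¹' interior (⋂ n, V n), ?_,
        isOpen_interior.preimage continuous_subtype_val, hy⟩⟩
      intro z hz
      exact mem_iInter.2 fun n => (hmem n z).1 (mem_iInter.1 (interior_subset hz) n)
  · rintro ⟨hps, hP⟩ _ ⟨U, hU, rfl⟩ ⟨p, hp⟩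
    choose C hC hpC hCU using fun n =>
      hB.exists_subset_of_mem_open (mem_iInter.1 hp n) (hU n)
    let V : ℕ → Set B := fun n => ⋂ m ∈ Finset.range (n + 1), C m
    have hV : ∀ n, IsClopen (V n) := fun n => isClopen_biInter_finset fun m _ => hC m
    have hpV : ∀ n, p ∈ V n := fun n => mem_iInter₂.2 fun m _ => hpC m
    have hVC : ∀ n, V n ⊆ C n := fun n => biInter_subset_of_mem (by simp)
    have hanti : Antitone V := fun m n hmn z hz => mem_iInter₂.2 fun k hk =>
      mem_iInter₂.1 hz k (Finset.range_mono (Nat.succ_le_succ hmn) hk)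
    obtain ⟨x, hx⟩ := exists_mem_iInter_of_pseudocompact hps
      (fun n => (Subtype.val ⁻¹' V n : Set X))
      (fun n => (hV n).preimage continuous_subtype_val)
      (fun n => by
        obtain ⟨y, hy, hyX⟩ := hd.inter_open_nonempty _ (hV n).isOpen ⟨p, hpV n⟩
        exact ⟨⟨y, hyX⟩, hy⟩)
      (fun m n hmn => preimage_mono (hanti hmn))
    obtain ⟨y, hy⟩ := hP _ ⟨fun n => (Subtype.val ⁻¹' V n : Set X),
      fun n => (hV n).isOpen.preimage continuous_subtype_val, rfl⟩ ⟨x, mem_iInter.2 hx⟩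
    obtain ⟨T, hTsub, hT, hyT⟩ := mem_interior.1 hy
    obtain ⟨W, hW, rfl⟩ := isOpen_induced_iff.1 hT
    refine ⟨y, mem_interior.2 ⟨W, ?_, hW, hyT⟩⟩
    have hcl : IsClosed (⋂ n, V n) := isClosed_iInter fun n => (hV n).isClosed
    have hWX : W ∩ X ⊆ ⋂ n, V n := fun z hz =>
      mem_iInter.2 fun n => mem_iInter.1
        (hTsub (show (⟨z, hz.2⟩ : X) ∈ Subtype.val ⁻¹' W from hz.1)) n
    calc W ⊆ closure (W ∩ X) := hd.open_subset_closure_inter hW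
      _ ⊆ ⋂ n, V n := hcl.closure_subset_iff.2 hWX
      _ ⊆ ⋂ n, U n := iInter_mono fun n => (hVC n).trans (hCU n)
end

section
/- Let X be a locally compact, N-compact zero-dimensional space with Banaschewski compactification bX. Then the remainder bX ∖ X, with the subspace topology, is an almost P-space. -/
/-!
Let `p ∉ X` lie in a `G_δ` set of the remainder, given by open sets `O n` of `B`. Since `X` is
`ℕ`-compact, some continuous `f : X → ℕ` does not converge at `p` (`exists_not_tendsto`), so `p`
avoids the clopen extension of each fibre `f ⁻¹' {n}`. Hence there is a decreasing sequence of
clopen sets `V n ∋ p` of `B` with `V n ⊆ O n` and `⋂ n, V n` disjoint from `X`.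

As `X` is dense and open in `B` (local compactness), each `V n ∩ X` contains a nonempty clopen set
`K n` of `B`. The family `K n` is locally finite in `X`, so `⋃ n, K n` is clopen in `X` and extends
to a clopen set `C` of `B`. By compactness `C` meets `⋂ n, V n`, so `C \ X` is nonempty. By density
`C \ V n` is contained in the closed set `⋃ m < n, K m ⊆ X`, so `C \ X ⊆ V n ⊆ O n` for all `n`.
Thus `C \ X` is a nonempty open subset of the given `G_δ` set (`exists_isClopen_of_antitone`).
-/

open Set TopologicalSpace

universe u v

lemma exists_isClopen_extension {B : Type u} [TopologicalSpace B] {X : Set B}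
    (hext : ∀ g : X → Bool, Continuous g → ∃ G : B → Bool, Continuous G ∧ ∀ x : X, G x = g x)
    {S : Set X} (hS : IsClopen S) :
    ∃ C : Set B, IsClopen C ∧ ∀ x : X, (x : B) ∈ C ↔ x ∈ S := by
  obtain ⟨G, hG, h⟩ := hext S.boolIndicator ((continuous_boolIndicator_iff_isClopen S).2 hS)
  refine ⟨G ⁻¹' {true}, (isClopen_discrete _).preimage hG, fun x => ?_⟩
  rw [mem_preimage, h, mem_singleton_iff, ← mem_iff_boolIndicator]

lemma isOpen_of_dense_of_locallyCompact {B : Type u} [TopologicalSpace B] [T2Space B] {X : Set B}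
    (hd : Dense X) [LocallyCompactSpace X] : IsOpen X := by
  refine isOpen_iff_mem_nhds.2 fun x hx => ?_
  obtain ⟨L, hL, hxL⟩ := exists_compact_mem_nhds (⟨x, hx⟩ : X)
  obtain ⟨T, hT, hTL⟩ := mem_nhds_subtype X ⟨x, hx⟩ L |>.1 hxL
  obtain ⟨O, hOT, hO, hxO⟩ := mem_nhds_iff.1 hT
  have hcl : IsClosed (((↑) : X → B) '' L) := (hL.image continuous_subtype_val).isClosed
  have hsub : O ∩ X ⊆ ((↑) : X → B) '' L := fun y hy => ⟨⟨y, hy.2⟩, hTL (hOT hy.1), rfl⟩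
  refine Filter.mem_of_superset (hO.mem_nhds hxO) fun y hy => ?_
  obtain ⟨z, _, rfl⟩ := closure_minimal hsub hcl (hd.open_subset_closure_inter hO hy)
  exact z.2

/-- If every coordinate of a closed embedding of `X` into `ℕ^ι` converged at `p`, then the trace on
`X` of the neighbourhood filter of `p` would converge in `X`, forcing `p ∈ X`. -/
lemma exists_not_tendsto {B : Type u} [TopologicalSpace B] [T2Space B] {X : Set B} (hd : Dense X)
    {ι : Type v} {e : X → ι → ℕ} (he : Topology.IsClosedEmbedding e) {p : B} (hp : p ∉ X) :
    ∃ i, ∀ k, ¬ Filter.Tendsto (fun x => e x i) (Filter.comap ((↑) : X → B) (nhds p)) (nhds k) := by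
  by_contra! h
  choose k hk using h
  have hne : (Filter.comap ((↑) : X → B) (nhds p)).NeBot :=
    mem_closure_iff_comap_neBot.1 (hd p)
  have ht : Filter.Tendsto e (Filter.comap ((↑) : X → B) (nhds p)) (nhds k) :=
    tendsto_pi_nhds.2 hk
  obtain ⟨x, rfl⟩ : k ∈ range e :=
    he.isClosed_range.mem_of_tendsto ht (Filter.Eventually.of_forall mem_range_self)
  have hx : Filter.Tendsto id (Filter.comap ((↑) : X → B) (nhds p)) (nhds x) :=
    he.isInducing.tendsto_nhds_iff.2 ht
  have h1 : Filter.Tendsto ((↑) : X → B) (Filter.comap ((↑) : X → B) (nhds p)) (nhds (x : B)) :=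
    (continuous_subtype_val.tendsto x).comp hx
  exact hp (tendsto_nhds_unique Filter.tendsto_comap h1 ▸ x.2)

/-- A decreasing sequence of nonempty clopen sets whose intersection misses the dense open set `X`
has an intersection with nonempty interior relative to `B \ X`. -/
lemma exists_isClopen_of_antitone {B : Type u} [TopologicalSpace B] [CompactSpace B]
    (hB : IsTopologicalBasis {s : Set B | IsClopen s}) {X : Set B} (hd : Dense X) (hX : IsOpen X)
    (hext : ∀ g : X → Bool, Continuous g → ∃ G : B → Bool, Continuous G ∧ ∀ x : X, G x = g x)
    {V : ℕ → Set B} (hV : ∀ n, IsClopen (V n)) (hne : ∀ n, (V n).Nonempty) (hanti : Antitone V)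
    (hVX : ∀ x ∈ X, ∃ n, x ∉ V n) :
    ∃ C : Set B, IsClopen C ∧ (C \ X).Nonempty ∧ ∀ n, C \ X ⊆ V n := by
  have hK : ∀ n, ∃ K : Set B, IsClopen K ∧ K.Nonempty ∧ K ⊆ V n ∩ X := fun n => by
    obtain ⟨x, hx⟩ := hd.inter_open_nonempty _ (hV n).isOpen (hne n)
    obtain ⟨K, hK, hxK, hKV⟩ := hB.exists_subset_of_mem_open hx ((hV n).isOpen.inter hX)
    exact ⟨K, hK, ⟨x, hxK⟩, hKV⟩
  choose K hKc hKne hKs using hK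
  have hlf : LocallyFinite fun n => ((↑) : X → B) ⁻¹' K n := fun x => by
    obtain ⟨n, hn⟩ := hVX x x.2
    refine ⟨((↑) : X → B) ⁻¹' (V n)ᶜ,
      ((hV n).compl.isOpen.preimage continuous_subtype_val).mem_nhds hn,
      (finite_lt_nat n).subset ?_⟩
    rintro m ⟨y, hyK, hyV⟩
    by_contra hmn
    exact hyV (hanti (not_lt.1 hmn) (hKs m hyK).1)
  obtain ⟨C, hC, hCK⟩ := exists_isClopen_extension hext
    (S := ⋃ n, ((↑) : X → B) ⁻¹' K n)
    ⟨hlf.isClosed_iUnion fun n => (hKc n).isClosed.preimage continuous_subtype_val,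
      isOpen_iUnion fun n => (hKc n).isOpen.preimage continuous_subtype_val⟩
  refine ⟨C, hC, ?_, fun n => ?_⟩
  · obtain ⟨q, hq⟩ := IsCompact.nonempty_iInter_of_sequence_nonempty_isCompact_isClosed
      (fun n => C ∩ V n) (fun n => inter_subset_inter_right _ (hanti n.le_succ))
      (fun n => by
        obtain ⟨x, hx⟩ := hKne n
        exact ⟨x, (hCK ⟨x, (hKs n hx).2⟩).2 (mem_iUnion.2 ⟨n, hx⟩), (hKs n hx).1⟩)
      (hC.isClosed.inter (hV 0).isClosed).isCompact
      (fun n => hC.isClosed.inter (hV n).isClosed)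
    rw [mem_iInter] at hq
    refine ⟨q, (hq 0).1, fun hqX => ?_⟩
    obtain ⟨n, hn⟩ := hVX q hqX
    exact hn (hq n).2
  · rintro q ⟨hqC, hqX⟩
    by_contra hqV
    have hcl : IsClosed (⋃ m ∈ Iio n, K m) :=
      (finite_Iio n).isClosed_biUnion fun m _ => (hKc m).isClosed
    have hsub : C ∩ (V n)ᶜ ∩ X ⊆ ⋃ m ∈ Iio n, K m := by
      rintro y ⟨⟨hyC, hyV⟩, hyX⟩
      obtain ⟨m, hm⟩ := mem_iUnion.1 ((hCK ⟨y, hyX⟩).1 hyC)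
      refine mem_biUnion (show m < n from ?_) hm
      by_contra hmn
      exact hyV (hanti (not_lt.1 hmn) (hKs m hm).1)
    have hq := closure_minimal hsub hcl
      (hd.open_subset_closure_inter (hC.isOpen.inter (hV n).compl.isOpen) ⟨hqC, hqV⟩)
    simp only [mem_iUnion] at hq
    obtain ⟨m, _, hm⟩ := hq
    exact hqX (hKs m hm).2

/-- If `X` is a locally compact, `ℕ`-compact zero-dimensional space with
Banaschewski compactification `B`, then the remainder `B ∖ X` is an almost `P`-space. -/
theorem stmt_16 {B : Type u} [TopologicalSpace B] [CompactSpace B] [T2Space B]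
    (hB : IsTopologicalBasis {s : Set B | IsClopen s})
    (X : Set B) (hd : Dense X)
    (hext : ∀ g : X → Bool, Continuous g → ∃ G : B → Bool, Continuous G ∧ ∀ x : X, G x = g x)
    (hlc : LocallyCompactSpace X)
    (hN : ∃ (ι : Type v) (e : X → (ι → ℕ)), Topology.IsClosedEmbedding e) :
    AlmostPSpace (Xᶜ : Set B) := by
  rintro _ ⟨U, hU, rfl⟩ ⟨⟨p, hp⟩, hpU⟩
  rw [mem_iInter] at hpU
  obtain ⟨ι, e, he⟩ := hN
  have hX : IsOpen X := isOpen_of_dense_of_locallyCompact hd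
  obtain ⟨i, hi⟩ := exists_not_tendsto hd he hp
  have hf : Continuous fun x => e x i := (continuous_apply i).comp he.continuous
  have hW : ∀ n, ∃ W : Set B, IsClopen W ∧ p ∈ W ∧ (((↑) : (Xᶜ : Set B) → B) ⁻¹' W ⊆ U n) ∧
      ∀ x : X, (x : B) ∈ W → e x i ≠ n := fun n => by
    obtain ⟨O, hO, hOU⟩ := isOpen_induced_iff.1 (hU n)
    obtain ⟨C, hC, hCn⟩ := exists_isClopen_extension hext
      (S := (fun x => e x i) ⁻¹' {n}) ((isClopen_discrete _).preimage hf)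
    have hpC : p ∉ C := fun hpC => hi n <| by
      rw [nhds_discrete ℕ, Filter.tendsto_pure]
      exact ⟨C, hC.isOpen.mem_nhds hpC, fun x hx => (hCn x).1 hx⟩
    have hpO : p ∈ O := by
      have := hpU n
      rwa [← hOU] at this
    obtain ⟨W, hW, hpW, hWs⟩ := hB.exists_subset_of_mem_open (show p ∈ O ∩ Cᶜ from ⟨hpO, hpC⟩)
      (hO.inter hC.compl.isOpen)
    refine ⟨W, hW, hpW, ?_, fun x hx hxn => (hWs hx).2 ((hCn x).2 hxn)⟩
    rw [← hOU]
    exact fun y hy => (hWs hy).1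
  choose W hWc hpW hWU hWX using hW
  obtain ⟨C, hC, ⟨q, hqC, hqX⟩, hCV⟩ := exists_isClopen_of_antitone hB hd hX hext
    (V := fun n => ⋂ m ∈ Iic n, W m)
    (fun n => (finite_Iic n).isClopen_biInter fun m _ => hWc m)
    (fun n => ⟨p, mem_iInter₂.2 fun m _ => hpW m⟩)
    (fun a b hab => biInter_subset_biInter_left (Iic_subset_Iic.2 hab))
    (fun x hx => ⟨e ⟨x, hx⟩ i, fun h =>
      hWX _ ⟨x, hx⟩ (mem_iInter₂.1 h _ self_mem_Iic) rfl⟩)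
  refine ⟨⟨q, hqX⟩, mem_interior.2 ⟨((↑) : (Xᶜ : Set B) → B) ⁻¹' C, fun y hy => ?_,
    hC.isOpen.preimage continuous_subtype_val, hqC⟩⟩
  exact mem_iInter.2 fun n => hWU n (mem_iInter₂.1 (hCV n ⟨hy, y.2⟩) n self_mem_Iic)
end

section
/- Let X be a zero-dimensional space with Banaschewski compactification bX, let F : bX → ℝ be continuous, and suppose Z := F⁻¹({0}) is nonempty and Z ∩ X = ∅. Then the subspace Z is a Parovičenko space: it is compact, Hausdorff with a basis of clopen sets, has no isolated points, every nonempty G_δ subset of Z has nonempty interior in Z, and Z is an F-space. -/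
/-!
Write `Z` for the zero-set of `F` and `Y` for its complement, an open set containing the dense
set `X`. Zero-dimensionality and continuity of `F` exhaust `Y` by an increasing sequence `Yₙ` of
clopen subsets of `B` (`exists_clopen_exhaustion`).

The engine is `exists_clopen_of_seq`: if `Eₙ` is clopen in `B` and disjoint from `Yₙ`, then the
family `Eₙ ∩ Y` is locally finite in `Y`, so its union is clopen in `Y`, and the extension property
of `B` yields a clopen `C ⊆ B` with `C ∩ Y = (⋃ Eₙ) ∩ Y`. If moreover every `Eₙ` is a nonempty
subset of `Y`, then `C` meets `Z`, since a compact `C ⊆ Y` would lie in a single `Yₘ`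
(`seq_meets`).

* `F`-space: extend `g` to `B` by Tietze, write (for the extension) `pos g = ⋃ Aₙ` with `Aₙ` clopen and take
  `Eₙ = Aₙ \ Yₙ`. The resulting `C` contains `pos g ∩ Z` and misses `neg g`.
* Nonempty `G_δ` sets: if `p ∈ ⋂ Uₙ`, take clopen neighbourhoods `Wₙ` of `p` with
  `Wₙ ∩ Z ⊆ Uₙ` and nonempty clopen `Eₙ ⊆ (W₀ ∩ ⋯ ∩ Wₙ ∩ Y) \ Yₙ`. Then `C ∩ Z` is nonempty, clopen and inside every `Uₙ`.
* No isolated points: if `W ∩ Z = {p}` with `W` clopen, infinitely many of the disjoint shells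
  `W ∩ (Yₙ₊₁ \ Yₙ)` are nonempty. Splitting them into two infinite subfamilies gives two disjoint
  clopen sets that both have to contain `p`.
-/

open Set TopologicalSpace

/-- A topological space is an `F`-space if for every continuous real-valued `g` the sets
`pos g` and `neg g` are completely separated. -/
def FSpace (Y : Type*) [TopologicalSpace Y] : Prop :=
  ∀ g : Y → ℝ, Continuous g → ∃ h : Y → ℝ, Continuous h ∧ (∀ y, h y ∈ Set.Icc (0:ℝ) 1) ∧
    (∀ y, 0 < g y → h y = 0) ∧ (∀ y, g y < 0 → h y = 1)

/-! ### Clopen sets in compact zero-dimensional spaces -/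

section ClopenBasis

variable {B : Type*} [TopologicalSpace B] [CompactSpace B]

/-- A clopen set can be interpolated between a closed set and an open set containing it. -/
lemma exists_clopen_between (hB : IsTopologicalBasis {s : Set B | IsClopen s})
    {K O : Set B} (hK : IsClosed K) (hO : IsOpen O) (hKO : K ⊆ O) :
    ∃ C : Set B, IsClopen C ∧ K ⊆ C ∧ C ⊆ O := by
  have hloc : ∀ x ∈ K, ∃ C : Set B, IsClopen C ∧ x ∈ C ∧ C ⊆ O := fun x hx => by
    obtain ⟨C, hC, hxC, hCO⟩ := hB.exists_subset_of_mem_open (hKO hx) hO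
    exact ⟨C, hC, hxC, hCO⟩
  refine hK.isCompact.induction_on (p := fun K => ∃ C : Set B, IsClopen C ∧ K ⊆ C ∧ C ⊆ O)
    ⟨∅, isClopen_empty, Subset.rfl, empty_subset _⟩ ?_ ?_ ?_
  · rintro s t hst ⟨C, hC, htC, hCO⟩
    exact ⟨C, hC, hst.trans htC, hCO⟩
  · rintro s t ⟨C, hC, hsC, hCO⟩ ⟨D, hD, htD, hDO⟩
    exact ⟨C ∪ D, hC.union hD, union_subset_union hsC htD, union_subset hCO hDO⟩
  · intro x hx
    obtain ⟨C, hC, hxC, hCO⟩ := hloc x hx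
    exact ⟨C, mem_nhdsWithin_of_mem_nhds (hC.isOpen.mem_nhds hxC), C, hC, Subset.rfl, hCO⟩

/-- A cozero set is a countable union of clopen sets. -/
lemma exists_clopen_iUnion_pos (hB : IsTopologicalBasis {s : Set B | IsClopen s})
    {G : B → ℝ} (hG : Continuous G) :
    ∃ A : ℕ → Set B, (∀ n, IsClopen (A n)) ∧ ⋃ n, A n = {x | 0 < G x} := by
  have key : ∀ n : ℕ, ∃ C : Set B, IsClopen C ∧ {x | 1 / ((n : ℝ) + 1) ≤ G x} ⊆ C ∧
      C ⊆ {x | 0 < G x} := fun n =>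
    exists_clopen_between hB (isClosed_le continuous_const hG) (isOpen_lt continuous_const hG)
      fun x hx => show 0 < G x from Nat.one_div_pos_of_nat.trans_le hx
  choose A hA hA1 hA2 using key
  refine ⟨A, hA, Subset.antisymm (iUnion_subset hA2) fun x hx => ?_⟩
  obtain ⟨n, hn⟩ := exists_nat_one_div_lt (show 0 < G x from hx)
  exact mem_iUnion.2 ⟨n, hA1 n hn.le⟩

lemma exists_clopen_exhaustion (hB : IsTopologicalBasis {s : Set B | IsClopen s})
    {F : B → ℝ} (hF : Continuous F) :
    ∃ Y : ℕ → Set B, (∀ n, IsClopen (Y n)) ∧ Monotone Y ∧ ⋃ n, Y n = (F ⁻¹' {0})ᶜ := by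
  obtain ⟨A, hA, hAU⟩ := exists_clopen_iUnion_pos hB hF.abs
  refine ⟨accumulate A, fun n => ?_, monotone_accumulate, ?_⟩
  · exact (finite_Iic n).isClopen_biUnion fun i _ => hA i
  · rw [iUnion_accumulate, hAU]
    ext x
    simp

end ClopenBasis

/-! ### Clopen sets from the extension property -/

section Extension

variable {B : Type*} [TopologicalSpace B]

/-- The extension property of the Banaschewski compactification in terms of sets: disjoint open
sets covering `X` are separated by a clopen set. -/
lemma exists_clopen_extension {X : Set B} (hd : Dense X)
    (hext : ∀ g : X → Bool, Continuous g → ∃ G : B → Bool, Continuous G ∧ ∀ x : X, G x = g x)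
    {U V : Set B} (hU : IsOpen U) (hV : IsOpen V) (hUV : Disjoint U V) (hX : X ⊆ U ∪ V) :
    ∃ C : Set B, IsClopen C ∧ U ⊆ C ∧ Disjoint V C := by
  classical
  have hg : Continuous fun x : X => decide ((x : B) ∈ U) := by
    rw [continuous_bool_rng true]
    have h1 : (fun x : X => decide ((x : B) ∈ U)) ⁻¹' {true} = Subtype.val ⁻¹' U := by
      ext x; simp
    have h2 : (Subtype.val ⁻¹' U : Set X) = (Subtype.val ⁻¹' V)ᶜ := by
      ext x
      have := hX x.2
      have h3 : ¬ ((x : B) ∈ U ∧ (x : B) ∈ V) := fun h => disjoint_left.1 hUV h.1 h.2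
      simp only [mem_preimage, mem_compl_iff]
      rcases this with h | h <;> tauto
    rw [h1]
    refine ⟨?_, hU.preimage continuous_subtype_val⟩
    rw [h2]
    exact (hV.preimage continuous_subtype_val).isClosed_compl
  obtain ⟨G, hG, hGg⟩ := hext _ hg
  have hC : IsClopen (G ⁻¹' {true}) := (isClopen_discrete {true}).preimage hG
  refine ⟨G ⁻¹' {true}, hC, fun x hx => ?_, disjoint_left.2 fun x hx hxC => ?_⟩
  · by_contra hxC
    obtain ⟨y, ⟨hyU, hyC⟩, hyX⟩ :=
      hd.inter_open_nonempty _ (hU.inter hC.compl.isOpen) ⟨x, hx, hxC⟩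
    exact hyC (by simpa [hyU] using hGg ⟨y, hyX⟩)
  · obtain ⟨y, ⟨hyV, hyC⟩, hyX⟩ :=
      hd.inter_open_nonempty _ (hV.inter hC.isOpen) ⟨x, hx, hxC⟩
    have h1 := hGg ⟨y, hyX⟩
    have h2 : G y = true := hyC
    have hyU : y ∈ U := by simpa [h2] using h1
    exact disjoint_left.1 hUV hyU hyV

/-- If the clopen sets `E n` escape the exhaustion `Y n`, they form a locally finite family in
`⋃ n, Y n`, so the trace of their union there is the trace of a clopen set. -/
lemma exists_clopen_of_seq {X : Set B} (hd : Dense X)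
    (hext : ∀ g : X → Bool, Continuous g → ∃ G : B → Bool, Continuous G ∧ ∀ x : X, G x = g x)
    {Y : ℕ → Set B} (hY : ∀ n, IsClopen (Y n)) (hm : Monotone Y) (hXY : X ⊆ ⋃ n, Y n)
    {E : ℕ → Set B} (hE : ∀ n, IsClopen (E n)) (hEY : ∀ n, Disjoint (E n) (Y n)) :
    ∃ C : Set B, IsClopen C ∧ ∀ x ∈ ⋃ n, Y n, (x ∈ C ↔ ∃ n, x ∈ E n) := by
  set U : Set B := (⋃ n, E n) ∩ ⋃ n, Y n with hUdef
  -- a point of `Y m` outside the union only has to avoid the finitely many `E n` with `n < m`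
  set V : Set B := ⋃ m, Y m ∩ ⋂ n ∈ Iio m, (E n)ᶜ with hVdef
  have hV_iff : ∀ x, x ∈ V ↔ x ∈ ⋃ n, Y n ∧ ∀ n, x ∉ E n := by
    intro x
    simp only [hVdef, mem_iUnion, mem_inter_iff, mem_iInter, mem_Iio, mem_compl_iff]
    constructor
    · rintro ⟨m, hxm, h⟩
      refine ⟨⟨m, hxm⟩, fun n hn => ?_⟩
      rcases lt_or_ge n m with hnm | hnm
      · exact h n hnm hn
      · exact disjoint_left.1 (hEY n) hn (hm hnm hxm)
    · rintro ⟨⟨m, hxm⟩, h⟩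
      exact ⟨m, hxm, fun n _ => h n⟩
  have hU : IsOpen U :=
    (isOpen_iUnion fun n => (hE n).isOpen).inter (isOpen_iUnion fun n => (hY n).isOpen)
  have hV : IsOpen V := isOpen_iUnion fun m => (hY m).isOpen.inter
    ((finite_Iio m).isOpen_biInter fun n _ => (hE n).compl.isOpen)
  have hUV : Disjoint U V := disjoint_left.2 fun x hx hxV => by
    obtain ⟨n, hn⟩ := mem_iUnion.1 hx.1
    exact ((hV_iff x).1 hxV).2 n hn
  have hcov : ⋃ n, Y n ⊆ U ∪ V := fun x hx => by
    by_cases h : ∃ n, x ∈ E n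
    · exact Or.inl ⟨mem_iUnion.2 h, hx⟩
    · exact Or.inr ((hV_iff x).2 ⟨hx, not_exists.1 h⟩)
  obtain ⟨C, hC, hUC, hVC⟩ := exists_clopen_extension hd hext hU hV hUV (hXY.trans hcov)
  refine ⟨C, hC, fun x hx => ⟨fun hxC => ?_, fun h => hUC ⟨mem_iUnion.2 h, hx⟩⟩⟩
  rcases hcov hx with h | h
  · exact mem_iUnion.1 h.1
  · exact absurd hxC (disjoint_left.1 hVC h)

/-- If nonempty sets `E n` escape the exhaustion `Y n`, a closed set containing all of them is not
covered by the exhaustion. -/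
lemma seq_meets [CompactSpace B]
    {Y : ℕ → Set B} (hY : ∀ n, IsClopen (Y n)) (hm : Monotone Y)
    {E : ℕ → Set B} (hEne : ∀ n, (E n).Nonempty) (hEY : ∀ n, Disjoint (E n) (Y n))
    {C : Set B} (hC : IsClosed C) (hEC : ∀ n, E n ⊆ C) : ∃ x ∈ C, x ∉ ⋃ n, Y n := by
  by_contra! hcon
  obtain ⟨m, hCm⟩ := hC.isCompact.elim_directed_cover Y (fun n => (hY n).isOpen) hcon
    hm.directed_le
  obtain ⟨x, hx⟩ := hEne m
  exact disjoint_left.1 (hEY m) hx (hCm (hEC m hx))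

/-- Traces of clopen subsets of `B` form a neighbourhood basis of each point of a subspace. -/
lemma exists_clopen_trace (hB : IsTopologicalBasis {s : Set B | IsClopen s}) {Z : Set B} {p : Z}
    {U : Set Z} (hU : IsOpen U) (hp : p ∈ U) :
    ∃ W : Set B, IsClopen W ∧ (p : B) ∈ W ∧ ∀ z : Z, (z : B) ∈ W → z ∈ U := by
  obtain ⟨O, hO, rfl⟩ := isOpen_induced_iff.1 hU
  obtain ⟨W, hW, hpW, hWO⟩ := hB.exists_subset_of_mem_open (show (p : B) ∈ O from hp) hO
  exact ⟨W, hW, hpW, fun z hz => hWO hz⟩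

end Extension

/-! ### Properties of a zero-set missing the dense subspace -/

section ZeroSet

variable {B : Type*} [TopologicalSpace B] [CompactSpace B]

lemma zeroSet_almostP (hB : IsTopologicalBasis {s : Set B | IsClopen s})
    {X : Set B} (hd : Dense X)
    (hext : ∀ g : X → Bool, Continuous g → ∃ G : B → Bool, Continuous G ∧ ∀ x : X, G x = g x)
    {Y : ℕ → Set B} (hY : ∀ n, IsClopen (Y n)) (hm : Monotone Y) {Z : Set B}
    (hYZ : ⋃ n, Y n = Zᶜ) (hXY : X ⊆ ⋃ n, Y n) : AlmostPSpace Z := by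
  rintro G ⟨U, hU, rfl⟩ ⟨p, hp⟩
  have hp' := mem_iInter.1 hp
  have hpY : ∀ n, (p : B) ∉ Y n := fun n hn => by
    have : (p : B) ∈ Zᶜ := hYZ ▸ mem_iUnion.2 ⟨n, hn⟩
    exact this p.2
  choose W hW hpW hWU using fun n => exists_clopen_trace hB (hU n) (hp' n)
  have key : ∀ n, ∃ E : Set B, IsClopen E ∧ E.Nonempty ∧ Disjoint E (Y n) ∧ E ⊆ Zᶜ ∧
      ∀ k ≤ n, E ⊆ W k := by
    intro n
    have hO : IsOpen ((⋂ k ∈ Iic n, W k) \ Y n) :=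
      ((finite_Iic n).isOpen_biInter fun k _ => (hW k).isOpen).sdiff (hY n).isClosed
    obtain ⟨x, ⟨hx1, hx2⟩, hxX⟩ := hd.inter_open_nonempty _ hO
      ⟨p, by simpa using fun k _ => hpW k, hpY n⟩
    have hYo : IsOpen (⋃ n, Y n) := isOpen_iUnion fun n => (hY n).isOpen
    obtain ⟨E, hE, hxE, hEO⟩ := hB.exists_subset_of_mem_open
      (show x ∈ ((⋂ k ∈ Iic n, W k) \ Y n) ∩ ⋃ n, Y n from ⟨⟨hx1, hx2⟩, hXY hxX⟩) (hO.inter hYo)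
    refine ⟨E, hE, ⟨x, hxE⟩, disjoint_left.2 fun y hy => (hEO hy).1.2,
      fun y hy => hYZ ▸ (hEO hy).2, fun k hk y hy => ?_⟩
    exact mem_iInter₂.1 (hEO hy).1.1 k hk
  choose E hE hEne hEY hEZ hEW using key
  obtain ⟨C, hC, hCE⟩ := exists_clopen_of_seq hd hext hY hm hXY hE hEY
  obtain ⟨q, hqC, hqY⟩ := seq_meets hY hm hEne hEY hC.isClosed fun n x hx =>
    (hCE x (hYZ ▸ hEZ n hx)).2 ⟨n, hx⟩
  have hqZ : q ∈ Z := by simpa [hYZ] using hqY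
  -- near a point of `C ∩ Z` outside `W k`, only `E n` with `n < k` occur, and these miss `Z`
  have hCW : ∀ z ∈ Z, z ∈ C → ∀ k, z ∈ W k := by
    intro z hzZ hzC k
    by_contra hzW
    have hO : IsOpen (C ∩ (W k)ᶜ ∩ ⋂ n ∈ Iio k, (E n)ᶜ) :=
      (hC.isOpen.inter (hW k).compl.isOpen).inter
        ((finite_Iio k).isOpen_biInter fun n _ => (hE n).compl.isOpen)
    obtain ⟨x, ⟨⟨hxC, hxW⟩, hxE⟩, hxX⟩ := hd.inter_open_nonempty _ hO
      ⟨z, ⟨hzC, hzW⟩, mem_iInter₂.2 fun n _ hzE => hEZ n hzE hzZ⟩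
    obtain ⟨n, hn⟩ := (hCE x (hXY hxX)).1 hxC
    rcases lt_or_ge n k with h | h
    · exact mem_iInter₂.1 hxE n h hn
    · exact hxW (hEW n k h hn)
  refine ⟨⟨q, hqZ⟩, mem_interior.2 ⟨Subtype.val ⁻¹' C, fun z hz => ?_,
    hC.isOpen.preimage continuous_subtype_val, hqC⟩⟩
  exact mem_iInter.2 fun n => hWU n z (hCW z z.2 hz n)

lemma zeroSet_not_isolated (hB : IsTopologicalBasis {s : Set B | IsClopen s})
    {X : Set B} (hd : Dense X)
    (hext : ∀ g : X → Bool, Continuous g → ∃ G : B → Bool, Continuous G ∧ ∀ x : X, G x = g x)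
    {Y : ℕ → Set B} (hY : ∀ n, IsClopen (Y n)) (hm : Monotone Y) {Z : Set B}
    (hYZ : ⋃ n, Y n = Zᶜ) (hXY : X ⊆ ⋃ n, Y n) (p : Z) : ¬ IsOpen ({p} : Set Z) := by
  intro hp
  obtain ⟨W, hW, hpW, hWp⟩ := exists_clopen_trace hB hp rfl
  have hpY : ∀ n, (p : B) ∉ Y n := fun n hn => by
    have : (p : B) ∈ Zᶜ := hYZ ▸ mem_iUnion.2 ⟨n, hn⟩
    exact this p.2
  set D : ℕ → Set B := fun n => W ∩ (Y (n + 1) \ Y n) with hD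
  have hDclopen : ∀ n, IsClopen (D n) := fun n => hW.inter ((hY _).diff (hY n))
  have hDY : ∀ n, D n ⊆ ⋃ n, Y n := fun n x hx => mem_iUnion.2 ⟨_, hx.2.1⟩
  have hDdisj : ∀ i j x, x ∈ D i → x ∈ D j → i = j := by
    intro i j x hi hj
    by_contra hij
    rcases lt_or_gt_of_ne hij with h | h
    · exact hj.2.2 (hm h hi.2.1)
    · exact hi.2.2 (hm h hj.2.1)
  have hfreq : ∀ N, ∃ n ≥ N, (D n).Nonempty := by
    intro N
    obtain ⟨x, ⟨hxW, hxN⟩, hxX⟩ := hd.inter_open_nonempty _ (hW.isOpen.sdiff (hY N).isClosed)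
      ⟨p, hpW, hpY N⟩
    classical
    have hex : ∃ m, x ∈ Y m := mem_iUnion.1 (hXY hxX)
    have hNm : N < Nat.find hex := by
      by_contra! h
      exact hxN (hm h (Nat.find_spec hex))
    refine ⟨Nat.find hex - 1, by omega, x, hxW, ?_, Nat.find_min hex (by omega)⟩
    rw [Nat.sub_add_cancel (by omega)]
    exact Nat.find_spec hex
  obtain ⟨φ, hφ, hφD⟩ := Filter.extraction_of_frequently_atTop (Filter.frequently_atTop.2 hfreq)
  have half : ∀ ψ : ℕ → ℕ, (∀ n, n ≤ ψ n) → ∃ C : Set B, IsClopen C ∧ (p : B) ∈ C ∧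
      ∀ x ∈ ⋃ n, Y n, (x ∈ C ↔ ∃ n, x ∈ D (φ (ψ n))) := by
    intro ψ hψ
    have hdis : ∀ n, Disjoint (D (φ (ψ n))) (Y n) := fun n => disjoint_left.2 fun x hx hxn =>
      hx.2.2 (hm ((hψ n).trans (hφ.id_le _)) hxn)
    obtain ⟨C, hC, hCE⟩ := exists_clopen_of_seq hd hext hY hm hXY
      (fun n => hDclopen (φ (ψ n))) hdis
    obtain ⟨q, ⟨hqC, hqW⟩, hqY⟩ := seq_meets hY hm (fun n => hφD (ψ n)) hdis
      (hC.isClosed.inter hW.isClosed)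
      fun n x hx => ⟨(hCE x (hDY _ hx)).2 ⟨n, hx⟩, hx.1⟩
    have hqZ : q ∈ Z := by simpa [hYZ] using hqY
    have hqp : (⟨q, hqZ⟩ : Z) = p := hWp _ hqW
    refine ⟨C, hC, ?_, hCE⟩
    rw [← hqp]
    exact hqC
  obtain ⟨C₁, hC₁, hp₁, hE₁⟩ := half (fun n => 2 * n) (fun n => by omega)
  obtain ⟨C₂, hC₂, hp₂, hE₂⟩ := half (fun n => 2 * n + 1) (fun n => by omega)
  obtain ⟨x, ⟨hx₁, hx₂⟩, hxX⟩ := hd.inter_open_nonempty _ (hC₁.isOpen.inter hC₂.isOpen)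
    ⟨p, hp₁, hp₂⟩
  obtain ⟨i, hi⟩ := (hE₁ x (hXY hxX)).1 hx₁
  obtain ⟨j, hj⟩ := (hE₂ x (hXY hxX)).1 hx₂
  have := hφ.injective (hDdisj _ _ x hi hj)
  omega

lemma zeroSet_fSpace [T2Space B] (hB : IsTopologicalBasis {s : Set B | IsClopen s})
    {X : Set B} (hd : Dense X)
    (hext : ∀ g : X → Bool, Continuous g → ∃ G : B → Bool, Continuous G ∧ ∀ x : X, G x = g x)
    {Y : ℕ → Set B} (hY : ∀ n, IsClopen (Y n)) (hm : Monotone Y) {Z : Set B}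
    (hYZ : ⋃ n, Y n = Zᶜ) (hXY : X ⊆ ⋃ n, Y n) : FSpace Z := by
  classical
  intro g hg
  have hZ : IsClosed Z := by
    rw [← isOpen_compl_iff, ← hYZ]
    exact isOpen_iUnion fun n => (hY n).isOpen
  obtain ⟨G, hG⟩ := ContinuousMap.exists_restrict_eq hZ ⟨g, hg⟩
  have hGg : ∀ z : Z, G z = g z := fun z => DFunLike.congr_fun hG z
  obtain ⟨A, hA, hAU⟩ := exists_clopen_iUnion_pos hB G.continuous
  obtain ⟨C, hC, hCE⟩ := exists_clopen_of_seq hd hext hY hm hXY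
    (E := fun n => A n \ Y n) (fun n => (hA n).diff (hY n)) fun n => disjoint_sdiff_left
  have hpos : ∀ z ∈ Z, 0 < G z → z ∈ C := by
    intro z hz hGz
    by_contra hzC
    obtain ⟨n, hn⟩ := mem_iUnion.1 (show z ∈ ⋃ n, A n from hAU ▸ hGz)
    have hzY : z ∉ Y n := fun h => by
      have : z ∈ Zᶜ := hYZ ▸ mem_iUnion.2 ⟨n, h⟩
      exact this hz
    obtain ⟨x, ⟨hxA, hxC⟩, hxX⟩ := hd.inter_open_nonempty _
      (((hA n).diff (hY n)).isOpen.inter hC.compl.isOpen) ⟨z, ⟨hn, hzY⟩, hzC⟩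
    exact hxC ((hCE x (hXY hxX)).2 ⟨n, hxA⟩)
  have hneg : ∀ z, G z < 0 → z ∉ C := by
    intro z hGz hzC
    obtain ⟨x, ⟨hxG, hxC⟩, hxX⟩ := hd.inter_open_nonempty _
      ((isOpen_lt G.continuous continuous_const).inter hC.isOpen) ⟨z, hGz, hzC⟩
    obtain ⟨n, hn⟩ := (hCE x (hXY hxX)).1 hxC
    have : x ∈ {x | 0 < G x} := hAU ▸ mem_iUnion.2 ⟨n, hn.1⟩
    exact lt_asymm (show G x < 0 from hxG) this
  refine ⟨fun z => Cᶜ.indicator (fun _ => (1 : ℝ)) z, ?_, fun z => ?_, fun z hz => ?_,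
    fun z hz => ?_⟩
  · exact (hC.compl.continuous_indicator continuous_const).comp continuous_subtype_val
  · by_cases h : (z : B) ∈ C <;> simp [h]
  · have := hpos z z.2 (by rwa [hGg])
    simp [this]
  · have := hneg z (by rwa [hGg])
    simp [this]

end ZeroSet

/-- A nonempty zero-set `Z` of the Banaschewski compactification `B` of a
zero-dimensional space `X` that misses `X` is a Parovičenko space: compact, Hausdorff with
a clopen basis, with no isolated points, nonempty `G_δ` sets have nonempty interior, and
it is an `F`-space. -/
theorem stmt_17 {B : Type*} [TopologicalSpace B] [CompactSpace B] [T2Space B]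
    (hB : IsTopologicalBasis {s : Set B | IsClopen s})
    (X : Set B) (hd : Dense X)
    (hext : ∀ g : X → Bool, Continuous g → ∃ G : B → Bool, Continuous G ∧ ∀ x : X, G x = g x)
    (F : B → ℝ) (hF : Continuous F)
    (hne : (F ⁻¹' {0}).Nonempty) (hZX : F ⁻¹' {0} ∩ X = ∅) :
    CompactSpace (F ⁻¹' {0}) ∧ T2Space (F ⁻¹' {0}) ∧
      IsTopologicalBasis {s : Set (F ⁻¹' {0}) | IsClopen s} ∧
      (∀ p : (F ⁻¹' {0} : Set B), ¬ IsOpen ({p} : Set (F ⁻¹' {0}))) ∧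
      AlmostPSpace (F ⁻¹' {0}) ∧ FSpace (F ⁻¹' {0}) := by
  have hZ : IsClosed (F ⁻¹' {0}) := isClosed_singleton.preimage hF
  obtain ⟨Y, hY, hm, hYZ⟩ := exists_clopen_exhaustion hB hF
  have hXY : X ⊆ ⋃ n, Y n := fun x hx => by
    rw [hYZ]
    exact fun hxZ => (hZX ▸ (⟨hxZ, hx⟩ : x ∈ F ⁻¹' {0} ∩ X) : x ∈ (∅ : Set B))
  refine ⟨isCompact_iff_compactSpace.1 hZ.isCompact, inferInstance, ?_,
    zeroSet_not_isolated hB hd hext hY hm hYZ hXY,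
    zeroSet_almostP hB hd hext hY hm hYZ hXY, zeroSet_fSpace hB hd hext hY hm hYZ hXY⟩
  refine isTopologicalBasis_of_isOpen_of_nhds (fun s hs => hs.isOpen) fun p U hp hU => ?_
  obtain ⟨W, hW, hpW, hWU⟩ := exists_clopen_trace hB hU hp
  exact ⟨Subtype.val ⁻¹' W, hW.preimage continuous_subtype_val, hpW, fun z hz => hWU z hz⟩
end

section
/- Let X be a zero-dimensional, locally compact space which is not pseudocompact, with Banaschewski compactification bX, and let υX ⊆ bX be the copy of the N-compactification υ₀X of X inside bX. Suppose X admits a partition of length κ, i.e., a family {U_i : i ∈ I} of pairwise disjoint nonempty clopen subsets of X whose union is X, with |I| = κ an infinite cardinal. Then each of the subspaces bX ∖ υX and bX ∖ X contains a pairwise disjoint family of nonempty open subsets of cardinality κ^ℵ₀; in particular, the cellularity of each of these subspaces is at least κ^ℵ₀. -/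
/-!
Inside each piece `U i` choose a nonempty compact open set `K i`. Because the `U i` form a clopen
partition, every union `⋃ i ∈ S, K i` is clopen in `X`, hence is the trace of a clopen set `W S` of
the compactification.

* If `S` is finite, the trace is compact, so `W S ⊆ X` by density (`subset_of_trace_compact`).
  Therefore `W S ∩ W T ⊆ X` as soon as `S ∩ T` is finite.
* If `S` is infinite, then `W S ⊄ X`: otherwise the trace would be compact, although it is covered
  by the disjoint open sets `U i`, infinitely many of which it meets.
* If `S` is countable, no point of `W S \ X` is in `υX`: for each `i ∈ S` the set `W S \ W {i}`
  is a clopen neighbourhood of the point, and the intersection of these misses `X`.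

So for an almost disjoint family of countably infinite subsets of the index set, the sets `W S`
leave pairwise disjoint nonempty open traces on both remainders. Such a family of size `κ ^ ℵ₀` is
given by the branches of the tree of finite sequences (`exists_almost_disjoint`).
-/

open Set TopologicalSpace

universe u

/-- An almost disjoint family of injective sequences in `ι`, indexed by `ℕ → ι`: the branch of `f`
is the sequence of its finite initial segments, coded in `ι` through `List ι ≃ ι`. -/
lemma exists_almost_disjoint (ι : Type u) [Infinite ι] :
    ∃ s : (ℕ → ι) → ℕ → ι, (∀ f, Function.Injective (s f)) ∧
      ∀ f g, f ≠ g → (range (s f) ∩ range (s g)).Finite := by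
  obtain ⟨e⟩ := Cardinal.eq.1 (Cardinal.mk_list_eq_mk ι)
  refine ⟨fun f n => e ((List.range n).map f), fun f m n h => ?_, fun f g hfg => ?_⟩
  · simpa using congrArg List.length (e.injective h)
  · obtain ⟨m, hm⟩ := Function.ne_iff.1 hfg
    refine ((Set.finite_Iic m).image fun n => e ((List.range n).map f)).subset ?_
    rintro _ ⟨⟨n, rfl⟩, ⟨k, hk⟩⟩
    have h := e.injective hk
    have hkn : k = n := by simpa using congrArg List.length h
    subst hkn
    refine ⟨k, ?_, rfl⟩
    by_contra hlt
    have hlt : m < k := not_le.1 hlt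
    exact hm (List.map_inj_left.1 h m (List.mem_range.2 hlt)).symm

section

variable {B : Type u} [TopologicalSpace B]

lemma subset_of_trace_compact [T2Space B] {X : Set B} (hd : Dense X) {W : Set B} (hW : IsOpen W)
    (hc : IsCompact ((↑) ⁻¹' W : Set X)) : W ⊆ X := by
  have h1 : IsClosed (X ∩ W) := by
    rw [← Subtype.image_preimage_coe]
    exact (hc.image continuous_subtype_val).isClosed
  intro p hp
  have := hd.open_subset_closure_inter hW hp
  rw [inter_comm, h1.closure_eq] at this
  exact this.1

lemma exists_clopen_trace_s18 {X : Set B}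
    (hext : ∀ g : X → Bool, Continuous g → ∃ G : B → Bool, Continuous G ∧ ∀ x : X, G x = g x)
    {S : Set X} (hS : IsClopen S) : ∃ W : Set B, IsClopen W ∧ ((↑) ⁻¹' W : Set X) = S := by
  obtain ⟨G, hG, hGS⟩ := hext S.boolIndicator ((continuous_boolIndicator_iff_isClopen S).2 hS)
  refine ⟨G ⁻¹' {true}, (isClopen_discrete _).preimage hG, ?_⟩
  ext x
  rw [Set.mem_iff_boolIndicator S x, ← hGS x]
  rfl

lemma exists_compact_open (hB : IsTopologicalBasis {s : Set B | IsClopen s}) {X : Set B}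
    (hlc : LocallyCompactSpace X) {U : Set X} (hU : IsOpen U) (hne : U.Nonempty) :
    ∃ K : Set X, IsClopen K ∧ IsCompact K ∧ K.Nonempty ∧ K ⊆ U := by
  obtain ⟨x, hx⟩ := hne
  obtain ⟨C, hC, hCU, hCc⟩ := hlc.local_compact_nhds x U (hU.mem_nhds hx)
  rw [nhds_subtype_eq_comap, Filter.mem_comap] at hC
  obtain ⟨O, hO, hOC⟩ := hC
  obtain ⟨Q, hQ, hxQ, hQO⟩ := hB.mem_nhds_iff.1 hO
  have hcl : IsClopen ((↑) ⁻¹' Q : Set X) := IsClopen.preimage hQ continuous_subtype_val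
  have hQC : ((↑) ⁻¹' Q : Set X) ⊆ C := (preimage_mono hQO).trans hOC
  exact ⟨_, hcl, hCc.of_isClosed_subset hcl.isClosed hQC, ⟨x, hxQ⟩, hQC.trans hCU⟩

lemma isClopen_biUnion_of_partition {Y ι : Type*} [TopologicalSpace Y] {U K : ι → Set Y}
    (hU : ∀ i, IsOpen (U i)) (hUdisj : Pairwise (Function.onFun Disjoint U))
    (hUcover : ⋃ i, U i = Set.univ) (hK : ∀ i, IsClopen (K i)) (hKU : ∀ i, K i ⊆ U i)
    (S : Set ι) : IsClopen (⋃ i ∈ S, K i) := by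
  refine ⟨?_, isOpen_biUnion fun i _ => (hK i).isOpen⟩
  rw [← isOpen_compl_iff]
  have : (⋃ i ∈ S, K i)ᶜ = (⋃ i ∈ S, U i \ K i) ∪ ⋃ i ∈ Sᶜ, U i := by
    ext x
    obtain ⟨i, hi⟩ := mem_iUnion.1 (hUcover.symm ▸ mem_univ x : x ∈ ⋃ i, U i)
    have huniq : ∀ j, x ∈ U j → j = i := fun j hj => by
      by_contra hne
      exact disjoint_left.1 (hUdisj hne) hj hi
    simp only [mem_compl_iff, mem_iUnion, mem_union, mem_diff, exists_prop, not_exists, not_and]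
    constructor
    · intro h
      by_cases hS : i ∈ S
      · exact Or.inl ⟨i, hS, hi, h i hS⟩
      · exact Or.inr ⟨i, hS, hi⟩
    · rintro (⟨j, hj, hjU, hjK⟩ | ⟨j, hj, hjU⟩) k hk hkK
      · rw [huniq k (hKU k hkK), ← huniq j hjU] at hkK
        exact hjK hkK
      · rw [huniq k (hKU k hkK), ← huniq j hjU] at hk
        exact hj hk
  rw [this]
  exact (isOpen_biUnion fun i _ => (hU i).sdiff (hK i).isClosed).union
    (isOpen_biUnion fun i _ => hU i)

/-- Open sets that pairwise meet only inside `Y`, none of them contained in `Y`, have distinct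
traces on `Yᶜ`; the traces form a cellular family of the size of the index type. -/
lemma exists_cellular_family {ι : Type u} {Y : Set B} (W : (ℕ → ι) → Set B)
    (hW : ∀ f, IsOpen (W f)) (hne : ∀ f, ∃ p ∈ W f, p ∉ Y)
    (hdisj : ∀ f g, f ≠ g → W f ∩ W g ⊆ Y) :
    ∃ 𝒰 : Set (Set (Yᶜ : Set B)), (∀ V ∈ 𝒰, IsOpen V ∧ V.Nonempty) ∧
        𝒰.PairwiseDisjoint id ∧ Cardinal.mk ι ^ Cardinal.aleph0 ≤ Cardinal.mk 𝒰 := by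
  let T : (ℕ → ι) → Set (Yᶜ : Set B) := fun f => (↑) ⁻¹' W f
  have hTne : ∀ f, (T f).Nonempty := fun f => by
    obtain ⟨p, hp, hpY⟩ := hne f
    exact ⟨⟨p, hpY⟩, hp⟩
  have hTd : ∀ f g, f ≠ g → Disjoint (T f) (T g) := fun f g hfg =>
    disjoint_left.2 fun p hp hq => p.2 (hdisj f g hfg ⟨hp, hq⟩)
  have hinj : Function.Injective T := fun f g h => by
    by_contra hfg
    obtain ⟨p, hp⟩ := hTne f
    exact disjoint_left.1 (hTd f g hfg) hp (h ▸ hp)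
  refine ⟨range T, ?_, ?_, ?_⟩
  · rintro _ ⟨f, rfl⟩
    exact ⟨(hW f).preimage continuous_subtype_val, hTne f⟩
  · rintro _ ⟨f, rfl⟩ _ ⟨g, rfl⟩ hfg
    exact hTd f g fun h => hfg (h ▸ rfl)
  · rw [Cardinal.mk_range_eq T hinj]
    simp

end

/-- If `X` is zero-dimensional, locally compact and not pseudocompact, and
`X` admits a partition `{U i : i ∈ ι}` into nonempty clopen pieces with `|ι| = κ` infinite,
then both `B ∖ υX` and `B ∖ X` contain a pairwise disjoint family of nonempty open sets of
cardinality `κ ^ ℵ₀`; in particular their cellularity is at least `κ ^ ℵ₀`. -/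
theorem stmt_18 {B : Type u} [TopologicalSpace B] [CompactSpace B] [T2Space B]
    (hB : IsTopologicalBasis {s : Set B | IsClopen s})
    (X : Set B) (hd : Dense X)
    (hext : ∀ g : X → Bool, Continuous g → ∃ G : B → Bool, Continuous G ∧ ∀ x : X, G x = g x)
    (hlc : LocallyCompactSpace X)
    (hnp : ¬ ∀ f : X → ℝ, Continuous f → ∃ M : ℝ, ∀ x, |f x| ≤ M)
    {ι : Type u} [Infinite ι] (U : ι → Set X)
    (hUclopen : ∀ i, IsClopen (U i)) (hUne : ∀ i, (U i).Nonempty)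
    (hUdisj : Pairwise (Function.onFun Disjoint U)) (hUcover : ⋃ i, U i = Set.univ) :
    (∃ 𝒰 : Set (Set ((upsilon X)ᶜ : Set B)), (∀ V ∈ 𝒰, IsOpen V ∧ V.Nonempty) ∧
        𝒰.PairwiseDisjoint id ∧ Cardinal.mk ι ^ Cardinal.aleph0 ≤ Cardinal.mk 𝒰) ∧
    (∃ 𝒰 : Set (Set (Xᶜ : Set B)), (∀ V ∈ 𝒰, IsOpen V ∧ V.Nonempty) ∧
        𝒰.PairwiseDisjoint id ∧ Cardinal.mk ι ^ Cardinal.aleph0 ≤ Cardinal.mk 𝒰) := by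
  choose K hKclopen hKc hKne hKU using
    fun i => exists_compact_open hB hlc (hUclopen i).isOpen (hUne i)
  have hKS := isClopen_biUnion_of_partition (fun i => (hUclopen i).isOpen) hUdisj hUcover
    hKclopen hKU
  have huniq : ∀ i j x, x ∈ U i → x ∈ U j → i = j := fun i j x hi hj => by
    by_contra hne
    exact disjoint_left.1 (hUdisj hne) hi hj
  choose W hWclopen hWX using fun S => exists_clopen_trace_s18 hext (hKS S)
  have hmem : ∀ S (x : X), (x : B) ∈ W S ↔ ∃ i ∈ S, x ∈ K i := fun S x => by
    have : x ∈ ((↑) ⁻¹' W S : Set X) ↔ x ∈ ⋃ i ∈ S, K i := by rw [hWX]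
    simpa using this
  have hfin : ∀ S : Set ι, S.Finite → W S ⊆ X := fun S hS =>
    subset_of_trace_compact hd (hWclopen S).isOpen
      (by rw [hWX]; exact hS.isCompact_biUnion fun i _ => hKc i)
  have hinf : ∀ S : Set ι, S.Infinite → ∃ p ∈ W S, p ∉ X := by
    intro S hS
    by_contra! hsub
    have hc : IsCompact ((↑) ⁻¹' W S : Set X) := by
      rw [Subtype.isCompact_iff, Subtype.image_preimage_coe, inter_eq_right.2 hsub]
      exact (hWclopen S).isClosed.isCompact
    obtain ⟨t, ht⟩ := hc.elim_finite_subcover U (fun i => (hUclopen i).isOpen)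
      (by rw [hUcover]; exact subset_univ _)
    refine hS (t.finite_toSet.subset fun i hi => ?_)
    obtain ⟨x, hx⟩ := hKne i
    obtain ⟨j, hj, hxj⟩ := mem_iUnion₂.1 (ht ((hmem S x).2 ⟨i, hi, hx⟩))
    rw [huniq i j x (hKU i hx) hxj]
    exact hj
  have hinter : ∀ S T : Set ι, (S ∩ T).Finite → W S ∩ W T ⊆ X := by
    intro S T hST
    refine subset_of_trace_compact hd ((hWclopen S).isOpen.inter (hWclopen T).isOpen) ?_
    have : ((↑) ⁻¹' (W S ∩ W T) : Set X) = ⋃ i ∈ S ∩ T, K i := by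
      ext x
      simp only [mem_preimage, mem_inter_iff, hmem, mem_iUnion, exists_prop]
      constructor
      · rintro ⟨⟨i, hi, hx⟩, ⟨j, hj, hy⟩⟩
        obtain rfl := huniq i j x (hKU i hx) (hKU j hy)
        exact ⟨i, ⟨hi, hj⟩, hx⟩
      · rintro ⟨i, ⟨hi, hj⟩, hx⟩
        exact ⟨⟨i, hi, hx⟩, ⟨i, hj, hx⟩⟩
    rw [this]
    exact hST.isCompact_biUnion fun i _ => hKc i
  have hups : ∀ (s : ℕ → ι) (p : B), p ∈ W (range s) → p ∉ X → p ∉ upsilon X := by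
    intro s p hp hpX hpu
    obtain ⟨q, hq, hqX⟩ := hpu (fun n => W (range s) \ W {s n}) fun n =>
      ⟨(hWclopen _).diff (hWclopen _), hp, fun h => hpX (hfin _ (finite_singleton _) h)⟩
    rw [mem_iInter] at hq
    obtain ⟨_, ⟨n, rfl⟩, hn⟩ := (hmem _ ⟨q, hqX⟩).1 (hq 0).1
    exact (hq n).2 ((hmem _ ⟨q, hqX⟩).2 ⟨s n, rfl, hn⟩)
  have hXu : X ⊆ upsilon X := fun p hp V hV => ⟨p, mem_iInter.2 fun n => (hV n).2, hp⟩
  obtain ⟨s, hsinj, hsfin⟩ := exists_almost_disjoint ι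
  have hne : ∀ f, ∃ p ∈ W (range (s f)), p ∉ X := fun f =>
    hinf _ (infinite_range_of_injective (hsinj f))
  have hdisj : ∀ f g, f ≠ g → W (range (s f)) ∩ W (range (s g)) ⊆ X := fun f g hfg =>
    hinter _ _ (hsfin f g hfg)
  constructor
  · refine exists_cellular_family (fun f => W (range (s f))) (fun f => (hWclopen _).isOpen)
      (fun f => ?_) fun f g hfg => (hdisj f g hfg).trans hXu
    obtain ⟨p, hp, hpX⟩ := hne f
    exact ⟨p, hp, hups _ p hp hpX⟩
  · exact exists_cellular_family (fun f => W (range (s f))) (fun f => (hWclopen _).isOpen)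
      hne hdisj
end
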